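/- Let $X \subseteq \mathbb{P}^{n+e}$ be a non-degenerate closed subscheme of dimension $n$ and reduction number $r$. Then $\deg(X) = \binom{e+r}{r}$ if and only if the homogeneous coordinate ring $R$ of $X$ is Cohen-Macaulay and has an $(r+1)$-linear minimal free resolution. -/

import Mathlib

set_option synthInstance.maxHeartbeats 1000000
set_option maxHeartbeats 2000000

noncomputable section

open MvPolynomial

namespace Paper

variable (k : Type) [Field k]

/-- The degree-`d` graded component of `S₀/I` as a `k`-subspace. -/
def quotComponent {N : ℕ} (I : Ideal (MvPolynomial (Fin N) k)) (d : ℕ) :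
    Submodule k (MvPolynomial (Fin N) k ⧸ I) :=
  (MvPolynomial.homogeneousSubmodule (Fin N) k d).map
    (Ideal.Quotient.mkₐ k I).toLinearMap

/-- Hilbert function of `S₀/I`. -/
def hilbFn {N : ℕ} (I : Ideal (MvPolynomial (Fin N) k)) (d : ℕ) : ℕ :=
  Module.finrank k (quotComponent k I d)

/-- `I` is a homogeneous ideal. -/
def IdealHomog {N : ℕ} (I : Ideal (MvPolynomial (Fin N) k)) : Prop :=
  ∀ f ∈ I, ∀ d : ℕ, MvPolynomial.homogeneousComponent d f ∈ I

/-- `I` is saturated with respect to the irrelevant maximal ideal. -/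
def IsSaturatedIdeal {N : ℕ} (I : Ideal (MvPolynomial (Fin N) k)) : Prop :=
  ∀ f : MvPolynomial (Fin N) k, (∀ i : Fin N, MvPolynomial.X i * f ∈ I) → f ∈ I

/-- The subscheme defined by `I` is non-degenerate: `I` contains no nonzero linear form. -/
def Nondegenerate {N : ℕ} (I : Ideal (MvPolynomial (Fin N) k)) : Prop :=
  ∀ f ∈ I, f.IsHomogeneous 1 → f = 0

/-- `S₀/I` has Hilbert polynomial of degree `n` and multiplicity (degree) `D`. -/
def HasDeg {N : ℕ} (I : Ideal (MvPolynomial (Fin N) k)) (n D : ℕ) : Prop :=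
  ∃ P : Polynomial ℚ, P.natDegree = n ∧ (D : ℚ) = P.leadingCoeff * (n.factorial : ℚ) ∧
    ∀ᶠ d : ℕ in Filter.atTop, (hilbFn k I d : ℚ) = Polynomial.eval (d : ℚ) P

/-- The irrelevant maximal ideal of `S₀/I`. -/
def irrelevantIdeal {N : ℕ} (I : Ideal (MvPolynomial (Fin N) k)) :
    Ideal (MvPolynomial (Fin N) k ⧸ I) :=
  Ideal.span (Set.range fun i : Fin N => Ideal.Quotient.mk I (MvPolynomial.X i))

/-- `S₀/I` is Cohen-Macaulay of dimension `c`: there is a regular sequence of length `c`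
in the irrelevant maximal ideal. -/
def IsCMQuot {N : ℕ} (I : Ideal (MvPolynomial (Fin N) k)) (c : ℕ) : Prop :=
  ∃ rs : List (MvPolynomial (Fin N) k ⧸ I), rs.length = c ∧
    (∀ x ∈ rs, x ∈ irrelevantIdeal k I) ∧
    RingTheory.Sequence.IsRegular (MvPolynomial (Fin N) k ⧸ I) rs

/-- The ideal of `R = S₀/I` generated by the images of `x_e, …, x_{N-1}`. -/
def tailVarsIdeal {N : ℕ} (e : ℕ) (I : Ideal (MvPolynomial (Fin N) k)) :
    Ideal (MvPolynomial (Fin N) k ⧸ I) :=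
  Ideal.span {y | ∃ i : Fin N, e ≤ (i : ℕ) ∧ y = Ideal.Quotient.mk I (MvPolynomial.X i)}

/-- The reduction number `r_S(R)` of the Noether normalization by the last variables:
the least `t > 0` with `R_{t+1} = J_{t+1}` for `J = (x_e, …, x_{N-1})R`. -/
def reductionNumber {N : ℕ} (e : ℕ) (I : Ideal (MvPolynomial (Fin N) k)) : ℕ :=
  sInf {t | 0 < t ∧ quotComponent k I (t + 1) ≤ (tailVarsIdeal k e I).restrictScalars k}

/-- The reduction number `r(R)`: the minimum of `r_J(R₊)` over all minimal reductions `J`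
of `R₊`, i.e. ideals generated by `c = dim R` linear forms. -/
def redNumAll {N : ℕ} (I : Ideal (MvPolynomial (Fin N) k)) (c : ℕ) : ℕ :=
  sInf {t | 0 < t ∧ ∃ L : Finset (MvPolynomial (Fin N) k ⧸ I),
    (L : Set (MvPolynomial (Fin N) k ⧸ I)) ⊆ quotComponent k I 1 ∧ L.card = c ∧
    quotComponent k I (t + 1) ≤
      (Ideal.span (L : Set (MvPolynomial (Fin N) k ⧸ I))).restrictScalars k}

/-- The `k`-algebra map `S = k[x_e, …, x_{N-1}] → R = S₀/I`. -/
def nnMap {N : ℕ} (e : ℕ) (I : Ideal (MvPolynomial (Fin N) k)) :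
    MvPolynomial {i : Fin N // e ≤ (i : ℕ)} k →ₐ[k] (MvPolynomial (Fin N) k ⧸ I) :=
  MvPolynomial.aeval fun i => Ideal.Quotient.mk I (MvPolynomial.X i.1)

/-- `S = k[x_e, …, x_{N-1}] → R = S₀/I` is a Noether normalization. -/
def IsNoetherNormalization {N : ℕ} (e : ℕ) (I : Ideal (MvPolynomial (Fin N) k)) : Prop :=
  Function.Injective (nnMap k e I) ∧ (nnMap k e I).toRingHom.Finite

/-- `μ_S(R) = dim_k R/S₊R`, the minimal number of generators of `R` as an `S`-module. -/
def muS {N : ℕ} (e : ℕ) (I : Ideal (MvPolynomial (Fin N) k)) : ℕ :=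
  Module.finrank k ((MvPolynomial (Fin N) k ⧸ I) ⧸ tailVarsIdeal k e I)

/-- total degree of an exponent vector -/
def tdeg {N : ℕ} (a : Fin N →₀ ℕ) : ℕ := a.sum fun _ n => n

/-- degree reverse lexicographic order with `x_0 > x_1 > ⋯ > x_{N-1}`. -/
def drlLt {N : ℕ} (a b : Fin N →₀ ℕ) : Prop :=
  tdeg a < tdeg b ∨
    (tdeg a = tdeg b ∧ ∃ i : Fin N, b i < a i ∧ ∀ j : Fin N, i < j → a j = b j)

/-- `m` is the leading (largest, w.r.t. degrevlex) exponent of `p`. -/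
def IsLeadExp {N : ℕ} (p : MvPolynomial (Fin N) k) (m : Fin N →₀ ℕ) : Prop :=
  m ∈ p.support ∧ ∀ m' ∈ p.support, m' ≠ m → drlLt m' m

/-- The initial ideal of `I` with respect to the degree reverse lexicographic order. -/
def initialIdeal {N : ℕ} (I : Ideal (MvPolynomial (Fin N) k)) :
    Ideal (MvPolynomial (Fin N) k) :=
  Ideal.span {q | ∃ p ∈ I, ∃ m, IsLeadExp k p m ∧ q = MvPolynomial.monomial m 1}

/-- `p` is homogeneous of degree `d ∈ ℤ` (`0` if `d < 0`). -/
def HomogOfDeg {σ : Type} (p : MvPolynomial σ k) (d : ℤ) : Prop :=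
  p = 0 ∨ ∃ m : ℕ, (m : ℤ) = d ∧ p.IsHomogeneous m

/-- A minimal graded free resolution of the graded module `M` (with grading `Mdeg`) over
`A = k[σ]`, recording the graded Betti numbers `β i j = dim_k Tor_i^A(M,k)_{i+j}`:
the `i`-th free module has `β i j` generators in internal degree `i + j`. -/
structure MinGradedFreeRes (σ : Type) (M : Type) [AddCommGroup M]
    [Module (MvPolynomial σ k) M] [Module k M] (Mdeg : ℤ → Submodule k M) where
  β : ℕ → ℤ → ℕ
  rowFinite : ∀ i, (Function.support (β i)).Finite
  d : ∀ i : ℕ, (((j : ℤ) × Fin (β (i + 1) j)) →₀ MvPolynomial σ k) →ₗ[MvPolynomial σ k]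
      ((j : ℤ) × Fin (β i j)) →₀ MvPolynomial σ k
  ε : (((j : ℤ) × Fin (β 0 j)) →₀ MvPolynomial σ k) →ₗ[MvPolynomial σ k] M
  graded : ∀ (i : ℕ) (j j' : ℤ) (s : Fin (β (i + 1) j)) (s' : Fin (β i j')),
      HomogOfDeg k (d i (Finsupp.single ⟨j, s⟩ 1) ⟨j', s'⟩) (j + 1 - j')
  minimal : ∀ (i : ℕ) (j j' : ℤ) (s : Fin (β (i + 1) j)) (s' : Fin (β i j')),
      j' = j + 1 → d i (Finsupp.single ⟨j, s⟩ 1) ⟨j', s'⟩ = 0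
  eps_graded : ∀ (j : ℤ) (s : Fin (β 0 j)), ε (Finsupp.single ⟨j, s⟩ 1) ∈ Mdeg j
  eps_surj : Function.Surjective ε
  exact0 : Function.Exact (d 0) ε
  exactSeq : ∀ i : ℕ, Function.Exact (d (i + 1)) (d i)

/-- `Mdeg` is a grading of the `k[σ]`-module `M`. -/
def IsGrading (σ : Type) (M : Type) [AddCommGroup M]
    [Module (MvPolynomial σ k) M] [Module k M] (Mdeg : ℤ → Submodule k M) : Prop :=
  (⨆ d, Mdeg d) = ⊤ ∧ iSupIndep Mdeg ∧
    ∀ (i : σ) (d : ℤ), ∀ x ∈ Mdeg d, (MvPolynomial.X i : MvPolynomial σ k) • x ∈ Mdeg (d + 1)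

/-- The standard grading on `S₀/I` (indexed by `ℤ`). -/
def quotDeg {N : ℕ} (I : Ideal (MvPolynomial (Fin N) k)) (d : ℤ) :
    Submodule k (MvPolynomial (Fin N) k ⧸ I) :=
  if 0 ≤ d then quotComponent k I d.toNat else ⊥

/-- The standard grading on a homogeneous ideal `I ⊆ S₀` (indexed by `ℤ`). -/
def idealDeg {N : ℕ} (I : Ideal (MvPolynomial (Fin N) k)) (d : ℤ) :
    Submodule k ↥I :=
  if 0 ≤ d then
    Submodule.comap ((I.subtype).restrictScalars k)
      (MvPolynomial.homogeneousSubmodule (Fin N) k d.toNat)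
  else ⊥

/-- `χ_m = Σ_{j=0}^m (-1)^j β_{m-j,j}`. -/
def chiOf (β : ℕ → ℤ → ℕ) (m : ℤ) : ℤ :=
  if m < 0 then 0
  else ∑ j ∈ Finset.range (m.toNat + 1), (-1 : ℤ) ^ j * (β (m.toNat - j) (j : ℤ) : ℤ)

/-- projective dimension read off from a minimal resolution's Betti table -/
def pdOf (β : ℕ → ℤ → ℕ) : ℕ∞ :=
  ⨆ i : {i : ℕ // ∃ j, β i j ≠ 0}, ((i : ℕ) : ℕ∞)

/-- index type of the variables `x_t, …, x_{N-1}` -/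
def tailIdx (N t : ℕ) := {i : Fin N // t ≤ (i : ℕ)}


/-- The `S = k[x_e,…,x_{N-1}]`-module structure on `R = S₀/I` via `nnMap`. -/
def nnModule {N : ℕ} (e : ℕ) (I : Ideal (MvPolynomial (Fin N) k)) :
    Module (MvPolynomial {i : Fin N // e ≤ (i : ℕ)} k) (MvPolynomial (Fin N) k ⧸ I) :=
  Module.compHom _ (nnMap k e I).toRingHom

/-- The underlying set of the `S`-submodule of `R = S₀/I` spanned by `s`. -/
def nnSpan {N : ℕ} (e : ℕ) (I : Ideal (MvPolynomial (Fin N) k))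
    (s : Set (MvPolynomial (Fin N) k ⧸ I)) : Set (MvPolynomial (Fin N) k ⧸ I) :=
  letI := nnModule k e I
  (Submodule.span (MvPolynomial {i : Fin N // e ≤ (i : ℕ)} k) s : Set _)

/-- The truncated ideal `(I)_{≥ r+1}`, generated by the homogeneous elements of `I`
of degree at least `r + 1`. -/
def truncIdeal {N : ℕ} (I : Ideal (MvPolynomial (Fin N) k)) (r : ℕ) :
    Ideal (MvPolynomial (Fin N) k) :=
  Ideal.span {f | f ∈ I ∧ ∃ d : ℕ, r + 1 ≤ d ∧ f.IsHomogeneous d}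

end Paper

end

/-!
Linear forms generating an `R₊`-primary ideal exist by prime avoidance, so the minimum defining
`r` is attained: there are linear forms `θ₀, …, θₙ` such that `I + (θ)` contains all forms of degree
greater than `r`. Complete them to coordinates and let `B` be the space of the
polynomials whose degree in the remaining `e` coordinates is at most `r`. Then `S₀ = I + B`, and
`B` is free over `k[θ]` of rank `C(e + r, r)`; comparing Hilbert functions,
`deg X = C(e + r, r)` exactly when `I ∩ B = 0`.

If `S₀ = I ⊕ B`, then `θ` is regular on `R`, no nonzero form of degree at most `r` lies in `I`, and
`R / (θ)` vanishes above degree `r`. The second fact bounds the degrees in a minimal resolution from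
below; the third bounds them from above, by comparison with the Koszul complex.
Conversely, if `R` is Cohen-Macaulay, prime avoidance gives a regular sequence of linear forms `ψ`.
Linearity of the resolution means that `I` has no nonzero form of degree at most `r`, so `I`
meets the space `B'` built from `ψ` in `0`; since `B` and `B'` have the same Hilbert function, so
does `R`.
-/

noncomputable section

open MvPolynomial

namespace Paper

attribute [local instance] MvPolynomial.gradedAlgebra

/-! ### Graded free modules -/

section IntegerGrading

variable {k : Type} [Field k] {σ : Type}

/-- The homogeneous component of integer degree `z`, which vanishes for `z < 0`. Integer degrees
are those of `HomogOfDeg`; they avoid truncated subtraction when degrees are shifted. -/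
def intComponent (z : ℤ) : MvPolynomial σ k →ₗ[k] MvPolynomial σ k :=
  if 0 ≤ z then homogeneousComponent z.toNat else 0

lemma intComponent_natCast (m : ℕ) (p : MvPolynomial σ k) :
    intComponent (m : ℤ) p = homogeneousComponent m p := by
  simp [intComponent]

lemma intComponent_of_neg {z : ℤ} (hz : z < 0) (p : MvPolynomial σ k) : intComponent z p = 0 := by
  simp [intComponent, not_le.mpr hz]

lemma coeff_intComponent (z : ℤ) (p : MvPolynomial σ k) (m : σ →₀ ℕ) :
    coeff m (intComponent z p) = if (m.degree : ℤ) = z then coeff m p else 0 := by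
  rcases lt_or_ge z 0 with hz | hz
  · rw [intComponent_of_neg hz, if_neg (by omega), coeff_zero]
  · lift z to ℕ using hz
    simp only [intComponent_natCast, coeff_homogeneousComponent, Nat.cast_inj]

lemma intComponent_zero (p : MvPolynomial σ k) : intComponent 0 p = C (constantCoeff p) := by
  rw [← Nat.cast_zero, intComponent_natCast, homogeneousComponent_zero, constantCoeff_eq]

lemma homogOfDeg_intComponent (z : ℤ) (p : MvPolynomial σ k) :
    HomogOfDeg k (intComponent z p) z := by
  rcases lt_or_ge z 0 with hz | hz
  · exact .inl (intComponent_of_neg hz p)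
  · lift z to ℕ using hz
    exact .inr ⟨z, rfl, intComponent_natCast (k := k) z p ▸ homogeneousComponent_isHomogeneous z p⟩

lemma HomogOfDeg.intComponent_eq {p : MvPolynomial σ k} {u : ℤ} (hp : HomogOfDeg k p u) (z : ℤ) :
    intComponent z p = if z = u then p else 0 := by
  rcases hp with rfl | ⟨m, rfl, hp⟩
  · simp
  ext1 a
  rw [coeff_intComponent, apply_ite (coeff a), coeff_zero]
  by_cases ha : coeff a p = 0
  · simp [ha]
  · have degree_a : a.degree = m := by rw [← hp ha, Finsupp.degree_eq_weight_one]; rfl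
    rw [degree_a]
    exact if_congr eq_comm rfl rfl

lemma HomogOfDeg.eq_zero_of_neg {p : MvPolynomial σ k} {u : ℤ} (hp : HomogOfDeg k p u)
    (hu : u < 0) : p = 0 := by
  rcases hp with rfl | ⟨m, rfl, -⟩
  · rfl
  · omega

lemma HomogOfDeg.isHomogeneous {p : MvPolynomial σ k} {m : ℕ} (hp : HomogOfDeg k p m) :
    p.IsHomogeneous m := by
  rcases hp with rfl | ⟨m', hm, hp⟩
  · exact isHomogeneous_zero σ k m
  · rwa [Nat.cast_inj.1 hm] at hp

lemma HomogOfDeg.mul {p q : MvPolynomial σ k} {u v : ℤ} (hp : HomogOfDeg k p u)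
    (hq : HomogOfDeg k q v) : HomogOfDeg k (p * q) (u + v) := by
  rcases hp with rfl | ⟨m, rfl, hp⟩
  · exact .inl (zero_mul q)
  rcases hq with rfl | ⟨m', rfl, hq⟩
  · exact .inl (mul_zero p)
  · exact .inr ⟨m + m', by push_cast; rfl, hp.mul hq⟩

lemma intComponent_mul_of_homogOfDeg {a : MvPolynomial σ k} {u : ℤ} (ha : HomogOfDeg k a u)
    (p : MvPolynomial σ k) (z : ℤ) : intComponent z (p * a) = intComponent (z - u) p * a := by
  rcases ha with rfl | ⟨m, rfl, ha⟩
  · simp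
  rcases lt_or_ge z 0 with hz | hz
  · rw [intComponent_of_neg hz, intComponent_of_neg (by omega), zero_mul]
  lift z to ℕ using hz
  have component_mul : homogeneousComponent z (p * a) =
      if m ≤ z then homogeneousComponent (z - m) p * a else 0 := by
    simp_rw [← decomposition.decompose'_apply]
    exact DirectSum.coe_decompose_mul_of_right_mem (homogeneousSubmodule σ k) z ha
  rw [intComponent_natCast, component_mul]
  split_ifs with hmz
  · rw [← Nat.cast_sub hmz, intComponent_natCast]
  · rw [intComponent_of_neg (by omega), zero_mul]

variable {ι ι' : Type}

/-- The component of degree `D` in the free module whose generator `x` has degree `w x`. -/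
def freeComponent (w : ι → ℤ) (D : ℤ) : (ι →₀ MvPolynomial σ k) →ₗ[k] (ι →₀ MvPolynomial σ k) :=
  Finsupp.lsum k fun x => (Finsupp.lsingle x : MvPolynomial σ k →ₗ[k] _) ∘ₗ intComponent (D - w x)

/-- `f` is homogeneous of degree `D` in the free module whose generator `x` has degree `w x`. -/
def IsFreeHomogeneous (w : ι → ℤ) (D : ℤ) (f : ι →₀ MvPolynomial σ k) : Prop :=
  ∀ x, HomogOfDeg k (f x) (D - w x)

lemma freeComponent_single (w : ι → ℤ) (D : ℤ) (x : ι) (p : MvPolynomial σ k) :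
    freeComponent w D (Finsupp.single x p) = Finsupp.single x (intComponent (D - w x) p) := by
  simp [freeComponent]

lemma freeComponent_apply (w : ι → ℤ) (D : ℤ) (f : ι →₀ MvPolynomial σ k) (x : ι) :
    freeComponent w D f x = intComponent (D - w x) (f x) := by
  classical
  induction f using Finsupp.induction_linear with
  | zero => simp
  | add f g hf hg => simp [hf, hg]
  | single y p =>
    rw [freeComponent_single]
    by_cases hyx : y = x
    · subst hyx; simp
    · simp [hyx]

lemma isFreeHomogeneous_freeComponent (w : ι → ℤ) (D : ℤ) (f : ι →₀ MvPolynomial σ k) :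
    IsFreeHomogeneous w D (freeComponent w D f) := fun x => by
  rw [freeComponent_apply]
  exact homogOfDeg_intComponent _ _

lemma IsFreeHomogeneous.freeComponent_eq {w : ι → ℤ} {D : ℤ} {f : ι →₀ MvPolynomial σ k}
    (hf : IsFreeHomogeneous w D f) : freeComponent w D f = f := by
  ext1 x
  rw [freeComponent_apply, (hf x).intComponent_eq, if_pos rfl]

lemma IsFreeHomogeneous.single {w : ι → ℤ} {D : ℤ} (x : ι) {p : MvPolynomial σ k}
    (hp : HomogOfDeg k p (D - w x)) : IsFreeHomogeneous w D (Finsupp.single x p) := fun y => by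
  classical
  rw [Finsupp.single_apply]
  split_ifs with hxy
  · exact hxy ▸ hp
  · exact .inl rfl

lemma freeComponent_comm {w : ι → ℤ} {w' : ι' → ℤ}
    (d : (ι →₀ MvPolynomial σ k) →ₗ[MvPolynomial σ k] (ι' →₀ MvPolynomial σ k))
    (hd : ∀ x y, HomogOfDeg k (d (Finsupp.single x 1) y) (w x - w' y)) (D : ℤ)
    (f : ι →₀ MvPolynomial σ k) : d (freeComponent w D f) = freeComponent w' D (d f) := by
  induction f using Finsupp.induction_linear with
  | zero => simp
  | add f g hf hg => simp [hf, hg]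
  | single x p =>
    have d_single : ∀ q : MvPolynomial σ k, d (Finsupp.single x q) = q • d (Finsupp.single x 1) :=
      fun q => by rw [← map_smul, Finsupp.smul_single_one]
    ext1 y
    rw [freeComponent_single, d_single, d_single p, freeComponent_apply, Finsupp.smul_apply,
      Finsupp.smul_apply, smul_eq_mul, smul_eq_mul, intComponent_mul_of_homogOfDeg (hd x y),
      sub_sub_sub_cancel_right]

lemma IsFreeHomogeneous.map {w : ι → ℤ} {w' : ι' → ℤ}
    {d : (ι →₀ MvPolynomial σ k) →ₗ[MvPolynomial σ k] (ι' →₀ MvPolynomial σ k)}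
    (hd : ∀ x y, HomogOfDeg k (d (Finsupp.single x 1) y) (w x - w' y)) {D : ℤ}
    {f : ι →₀ MvPolynomial σ k} (hf : IsFreeHomogeneous w D f) : IsFreeHomogeneous w' D (d f) := by
  rw [← hf.freeComponent_eq, freeComponent_comm d hd]
  exact isFreeHomogeneous_freeComponent _ _ _

lemma exists_sum_freeComponent_eq (w : ι → ℤ) (f : ι →₀ MvPolynomial σ k) :
    ∃ T : Finset ℤ, ∑ D ∈ T, freeComponent w D f = f := by
  classical
  refine ⟨f.support.biUnion fun x => (f x).support.image fun m => (m.degree : ℤ) + w x, ?_⟩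
  ext x m
  simp_rw [Finsupp.finsetSum_apply, coeff_sum, freeComponent_apply, coeff_intComponent]
  by_cases hm : coeff m (f x) = 0
  · simp [hm]
  have hx : f x ≠ 0 := fun h => hm (by rw [h, coeff_zero])
  rw [Finset.sum_eq_single ((m.degree : ℤ) + w x)]
  · simp
  · exact fun D _ hD => if_neg fun h => hD (by omega)
  · refine fun h => absurd (Finset.mem_biUnion.2 ⟨x, ?_, ?_⟩) h
    · exact Finsupp.mem_support_iff.2 hx
    · exact Finset.mem_image_of_mem _ (mem_support_iff.2 hm)

end IntegerGrading

/-! ### The irrelevant maximal ideal -/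

lemma mem_idealOfVars_iff {σ A : Type*} [CommRing A] {p : MvPolynomial σ A} :
    p ∈ idealOfVars σ A ↔ constantCoeff p = 0 := by
  rw [← pow_one (idealOfVars σ A), mem_pow_idealOfVars_iff']
  simp [Finsupp.degree_eq_zero_iff, constantCoeff_eq]

lemma le_idealOfVars {σ k : Type*} [Field k] {J : Ideal (MvPolynomial σ k)}
    (hJ : ∀ f ∈ J, homogeneousComponent 0 f ∈ J) (hJ_top : J ≠ ⊤) : J ≤ idealOfVars σ k := by
  refine fun f hf => mem_idealOfVars_iff.2 ?_
  by_contra hf₀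
  refine hJ_top (J.eq_top_of_isUnit_mem ?_ ((isUnit_iff_ne_zero.2 hf₀).map C))
  rw [constantCoeff_eq, ← homogeneousComponent_zero]
  exact hJ f hf

/-! ### Existence of minimal graded free resolutions -/

section Existence

variable {k : Type} [Field k] {σ ι : Type}

lemma exists_homogeneous_generators [Finite σ] [Finite ι] (w : ι → ℤ)
    (K : Submodule (MvPolynomial σ k) (ι →₀ MvPolynomial σ k))
    (hK : ∀ f ∈ K, ∀ D, freeComponent w D f ∈ K) :
    ∃ (m : ℕ) (δ : Fin m → ℤ) (g : Fin m → ι →₀ MvPolynomial σ k),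
      (∀ i, IsFreeHomogeneous w (δ i) (g i)) ∧
        Submodule.span (MvPolynomial σ k) (Set.range g) = K := by
  let H : Set (ι →₀ MvPolynomial σ k) := {f | f ∈ K ∧ ∃ D, IsFreeHomogeneous w D f}
  have span_H : Submodule.span (MvPolynomial σ k) H = K := by
    refine le_antisymm (Submodule.span_le.2 fun f hf => hf.1) fun f hf => ?_
    obtain ⟨T, hT⟩ := exists_sum_freeComponent_eq w f
    rw [← hT]
    exact Submodule.sum_mem _ fun D _ => Submodule.subset_span
      ⟨hK f hf D, D, isFreeHomogeneous_freeComponent w D f⟩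
  obtain ⟨T, hTH, hT⟩ := (Submodule.fg_span_iff_fg_span_finset_subset H).1
    (IsNoetherian.noetherian (Submodule.span (MvPolynomial σ k) H))
  choose δ hδ using fun i => (hTH (T.equivFin.symm i).2).2
  refine ⟨T.card, δ, fun i => T.equivFin.symm i, hδ, ?_⟩
  rw [← span_H, hT, show (fun i => (T.equivFin.symm i : ι →₀ MvPolynomial σ k)) =
    Subtype.val ∘ T.equivFin.symm from rfl, T.equivFin.symm.surjective.range_comp]
  exact congrArg _ Subtype.range_coe

lemma mem_span_image_compl_of_constantCoeff_ne_zero {ι' : Type} {w : ι → ℤ} {δ : ι' → ℤ}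
    {g : ι' → ι →₀ MvPolynomial σ k} (hg : ∀ i, IsFreeHomogeneous w (δ i) (g i))
    {c : ι' →₀ MvPolynomial σ k} (hc : Finsupp.linearCombination (MvPolynomial σ k) g c = 0)
    {i : ι'} (hi : constantCoeff (c i) ≠ 0) :
    g i ∈ Submodule.span (MvPolynomial σ k) (g '' {i}ᶜ) := by
  classical
  let d := Finsupp.linearCombination (MvPolynomial σ k) g
  have d_graded : ∀ x y, HomogOfDeg k (d (Finsupp.single x 1) y) (δ x - w y) := fun x y => by
    simpa only [d, Finsupp.linearCombination_single, one_smul] using hg x y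
  let c' := freeComponent δ (δ i) c
  have c'_apply : c' i = C (constantCoeff (c i)) := by
    rw [freeComponent_apply, sub_self, intComponent_zero]
  have relation : c' i • g i + d (c'.erase i) = 0 := by
    rw [← Finsupp.linearCombination_single, ← map_add, Finsupp.single_add_erase]
    exact (freeComponent_comm d d_graded _ c).trans (by rw [show d c = 0 from hc, map_zero])
  have d_mem : d (c'.erase i) ∈ Submodule.span (MvPolynomial σ k) (g '' {i}ᶜ) := by
    refine Finsupp.mem_span_image_iff_linearCombination _ |>.2 ⟨c'.erase i, ?_, rfl⟩
    rw [Finsupp.mem_supported, Finsupp.support_erase]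
    exact fun x hx => Finset.ne_of_mem_erase (Finset.mem_coe.1 hx)
  have g_eq : g i = -((C (constantCoeff (c i))⁻¹ : MvPolynomial σ k) • d (c'.erase i)) := by
    rw [← smul_neg, ← eq_neg_of_add_eq_zero_left relation, smul_smul, c'_apply, ← C_mul,
      inv_mul_cancel₀ hi, C_1, one_smul]
  rw [g_eq]
  exact neg_mem (Submodule.smul_mem _ _ d_mem)

lemma exists_minimal_homogeneous_generators [Finite σ] [Finite ι] (w : ι → ℤ)
    (K : Submodule (MvPolynomial σ k) (ι →₀ MvPolynomial σ k))
    (hK : ∀ f ∈ K, ∀ D, freeComponent w D f ∈ K) :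
    ∃ (m : ℕ) (δ : Fin m → ℤ) (g : Fin m → ι →₀ MvPolynomial σ k),
      (∀ i, IsFreeHomogeneous w (δ i) (g i)) ∧
        Submodule.span (MvPolynomial σ k) (Set.range g) = K ∧
        ∀ c, Finsupp.linearCombination (MvPolynomial σ k) g c = 0 →
          ∀ i, constantCoeff (c i) = 0 := by
  obtain ⟨m, hm⟩ := exists_minimal_of_wellFoundedLT _ (exists_homogeneous_generators w K hK)
  obtain ⟨δ, g, hg, hgK⟩ := hm.prop
  refine ⟨m, δ, g, hg, hgK, fun c hc i => ?_⟩
  by_contra hi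
  have g_mem := mem_span_image_compl_of_constantCoeff_ne_zero hg hc hi
  obtain _ | m := m
  · exact i.elim0
  refine hm.not_prop_of_lt m.lt_succ_self ⟨δ ∘ i.succAbove, g ∘ i.succAbove, fun x => hg _, ?_⟩
  rw [Set.range_comp, Fin.range_succAbove, ← hgK]
  refine le_antisymm (Submodule.span_mono (Set.image_subset_range _ _)) (Submodule.span_le.2 ?_)
  rintro _ ⟨x, rfl⟩
  rcases eq_or_ne x i with rfl | hx
  · exact g_mem
  · exact Submodule.subset_span ⟨x, hx, rfl⟩

lemma exists_equiv_sigma_fin {ι α : Type*} [Finite ι] (δ : ι → α) :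
    ∃ β : α → ℕ, (Function.support β).Finite ∧
      ∃ E : ((j : α) × Fin (β j)) ≃ ι, ∀ x, δ (E x) = x.1 := by
  refine ⟨fun j => Nat.card {i // δ i = j}, (Set.finite_range δ).subset fun j hj => ?_,
    (Equiv.sigmaCongrRight fun j => (Finite.equivFin {i // δ i = j}).symm).trans
      (Equiv.sigmaFiberEquiv δ), fun x => ((Finite.equivFin _).symm x.2).2⟩
  obtain ⟨i, hi⟩ := (Nat.card_ne_zero.1 hj).1
  exact ⟨i, hi⟩

lemma finite_sigma_fin {α : Type*} {β : α → ℕ} (hβ : (Function.support β).Finite) :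
    Finite ((j : α) × Fin (β j)) := by
  have := hβ.to_subtype
  refine Finite.of_surjective
    (fun x : (j : Function.support β) × Fin (β j) => (⟨x.1, x.2⟩ : (j : α) × Fin (β j))) ?_
  rintro ⟨j, s⟩
  exact ⟨⟨⟨j, s.pos.ne'⟩, s⟩, rfl⟩

/-- One stage of the construction of a minimal resolution: a graded free module together with the
graded submodule `K ⊆ 𝔪F` that the next differential has to hit. The generator `⟨j, s⟩` is given
degree `j`; the `i`-th stage is shifted by `i` in the resolution. -/
structure ResolutionStage (k : Type) [Field k] (σ : Type) where
  β : ℤ → ℕ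
  finite_support : (Function.support β).Finite
  K : Submodule (MvPolynomial σ k) (((j : ℤ) × Fin (β j)) →₀ MvPolynomial σ k)
  graded : ∀ f ∈ K, ∀ D, freeComponent Sigma.fst D f ∈ K
  minimal : ∀ f ∈ K, ∀ x, constantCoeff (f x) = 0

lemma ResolutionStage.exists_next [Finite σ] (s : ResolutionStage k σ) :
    ∃ (t : ResolutionStage k σ) (d : (((j : ℤ) × Fin (t.β j)) →₀ MvPolynomial σ k)
        →ₗ[MvPolynomial σ k] (((j : ℤ) × Fin (s.β j)) →₀ MvPolynomial σ k)),
      LinearMap.range d = s.K ∧ LinearMap.ker d = t.K ∧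
        ∀ x y, HomogOfDeg k (d (Finsupp.single x 1) y) (x.1 + 1 - y.1) := by
  have := finite_sigma_fin s.finite_support
  obtain ⟨m, δ, g, hg, hgK, hmin⟩ :=
    exists_minimal_homogeneous_generators Sigma.fst s.K s.graded
  obtain ⟨β, hβ, E, hE⟩ := exists_equiv_sigma_fin fun i => δ i - 1
  let d := Finsupp.linearCombination (MvPolynomial σ k) (g ∘ E)
  have d_graded : ∀ x y, HomogOfDeg k (d (Finsupp.single x 1) y) (x.1 + 1 - y.1) := fun x y => by
    rw [← hE x, sub_add_cancel]
    simpa only [d, Finsupp.linearCombination_single, one_smul, Function.comp_apply] using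
      hg (E x) y
  have d_minimal : ∀ f ∈ LinearMap.ker d, ∀ x, constantCoeff (f x) = 0 := fun f hf x => by
    have hf' : Finsupp.linearCombination (MvPolynomial σ k) g (f.equivMapDomain E) = 0 := by
      rw [Finsupp.linearCombination_equivMapDomain]; exact hf
    simpa only [Finsupp.equivMapDomain_apply, Equiv.symm_apply_apply] using hmin _ hf' (E x)
  refine ⟨⟨β, hβ, LinearMap.ker d, fun f hf D => ?_, d_minimal⟩, d, ?_, rfl, d_graded⟩
  · have shift : freeComponent Sigma.fst D f =
        freeComponent (fun x : (j : ℤ) × Fin (β j) => x.1 + 1) (D + 1) f := by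
      ext1 x
      rw [freeComponent_apply, freeComponent_apply, add_sub_add_right_eq_sub]
    rw [LinearMap.mem_ker] at hf ⊢
    rw [shift, freeComponent_comm d d_graded, hf, map_zero]
  · rw [← hgK, Finsupp.range_linearCombination, E.surjective.range_comp]

lemma IdealHomog.intComponent_mem {N : ℕ} {I : Ideal (MvPolynomial (Fin N) k)}
    (hI : IdealHomog k I) {f : MvPolynomial (Fin N) k} (hf : f ∈ I) (z : ℤ) :
    intComponent z f ∈ I := by
  rcases lt_or_ge z 0 with hz | hz
  · rw [intComponent_of_neg hz]; exact I.zero_mem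
  · lift z to ℕ using hz
    rw [intComponent_natCast]; exact hI f hf z

lemma IdealHomog.le_idealOfVars {N : ℕ} {I : Ideal (MvPolynomial (Fin N) k)}
    (hI : IdealHomog k I) (hI_top : I ≠ ⊤) : I ≤ idealOfVars (Fin N) k :=
  Paper.le_idealOfVars (fun f hf => hI f hf 0) hI_top

lemma ResolutionStage.exists_cover {N : ℕ} (I : Ideal (MvPolynomial (Fin N) k))
    (hI : IdealHomog k I) (hI_top : I ≠ ⊤) :
    ∃ (s : ResolutionStage k (Fin N)) (ε : (((j : ℤ) × Fin (s.β j)) →₀ MvPolynomial (Fin N) k)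
        →ₗ[MvPolynomial (Fin N) k] MvPolynomial (Fin N) k ⧸ I),
      (∀ j t, ε (Finsupp.single ⟨j, t⟩ 1) ∈ quotDeg k I j) ∧ Function.Surjective ε ∧
        LinearMap.ker ε = s.K := by
  obtain ⟨β, hβ, E, hE⟩ := exists_equiv_sigma_fin fun _ : Unit => (0 : ℤ)
  let u := E.symm ()
  have eq_u : ∀ x, x = u := fun x => E.injective (Subsingleton.elim _ _)
  let ε : (((j : ℤ) × Fin (β j)) →₀ MvPolynomial (Fin N) k) →ₗ[MvPolynomial (Fin N) k]
      MvPolynomial (Fin N) k ⧸ I := (Submodule.mkQ I) ∘ₗ Finsupp.lapply u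
  have mem_ker : ∀ f, f ∈ LinearMap.ker ε ↔ f u ∈ I := fun f => Ideal.Quotient.eq_zero_iff_mem
  refine ⟨⟨β, hβ, LinearMap.ker ε, fun f hf D => ?_, fun f hf x => ?_⟩, ε, fun j t => ?_,
    fun y => ?_, rfl⟩
  · rw [mem_ker, freeComponent_apply]
    exact hI.intComponent_mem ((mem_ker f).1 hf) _
  · rw [eq_u x]
    exact mem_idealOfVars_iff.1 (hI.le_idealOfVars hI_top ((mem_ker f).1 hf))
  · obtain rfl : (0 : ℤ) = j := hE ⟨j, t⟩
    refine ⟨1, (mem_homogeneousSubmodule 0 1).2 (isHomogeneous_one (Fin N) k), ?_⟩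
    change Ideal.Quotient.mk I 1 = Ideal.Quotient.mk I (Finsupp.single ⟨0, t⟩ 1 u)
    rw [← eq_u, Finsupp.single_eq_same]
  · obtain ⟨p, rfl⟩ := Ideal.Quotient.mk_surjective y
    refine ⟨Finsupp.single u p, ?_⟩
    change Ideal.Quotient.mk I (Finsupp.single u p u) = _
    rw [Finsupp.single_eq_same]

theorem nonempty_minGradedFreeRes {N : ℕ} {I : Ideal (MvPolynomial (Fin N) k)}
    (hI : IdealHomog k I) (hI_top : I ≠ ⊤) :
    Nonempty (MinGradedFreeRes k (Fin N) (MvPolynomial (Fin N) k ⧸ I) (quotDeg k I)) := by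
  obtain ⟨s₀, ε, ε_graded, ε_surj, ker_ε⟩ := ResolutionStage.exists_cover I hI hI_top
  choose next d range_d ker_d d_graded using fun s : ResolutionStage k (Fin N) => s.exists_next
  let s : ℕ → ResolutionStage k (Fin N) := fun i => Nat.rec s₀ (fun _ s => next s) i
  exact ⟨{
    β := fun i => (s i).β
    rowFinite := fun i => (s i).finite_support
    d := fun i => d (s i)
    ε := ε
    graded := fun i j j' t t' => d_graded (s i) ⟨j, t⟩ ⟨j', t'⟩
    minimal := fun i j j' t t' hj => by
      have mem_K : d (s i) (Finsupp.single ⟨j, t⟩ 1) ∈ (s i).K := range_d (s i) ▸ ⟨_, rfl⟩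
      have hom := (d_graded (s i) ⟨j, t⟩ ⟨j', t'⟩).intComponent_eq 0
      rwa [if_pos (by simp only [hj, sub_self]), intComponent_zero, (s i).minimal _ mem_K, C_0,
        eq_comm] at hom
    eps_graded := ε_graded
    eps_surj := ε_surj
    exact0 := LinearMap.exact_iff.2 (ker_ε.trans (range_d s₀).symm)
    exactSeq := fun i => LinearMap.exact_iff.2 ((ker_d (s i)).trans (range_d (s (i + 1))).symm) }⟩

end Existence

/-! ### Free modules modulo an ideal -/

section SmulTop

variable {A ι ι' : Type*} [CommRing A] {J : Ideal A}

lemma mem_smul_top_iff_forall_apply_mem {f : ι →₀ A} :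
    f ∈ J • (⊤ : Submodule A (ι →₀ A)) ↔ ∀ x, f x ∈ J := by
  refine ⟨fun hf x => ?_, fun hf => ?_⟩
  · exact Submodule.smul_induction_on hf (fun a ha g _ => J.mul_mem_right (g x) ha)
      fun f g hf hg => J.add_mem hf hg
  · rw [← f.sum_single]
    refine Submodule.sum_mem _ fun x _ => ?_
    rw [← Finsupp.smul_single_one]
    exact Submodule.smul_mem_smul (hf x) trivial

lemma map_mem_smul_top {M M' : Type*} [AddCommGroup M] [Module A M] [AddCommGroup M'] [Module A M']
    (d : M →ₗ[A] M') {f : M} (hf : f ∈ J • (⊤ : Submodule A M)) :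
    d f ∈ J • (⊤ : Submodule A M') := by
  have := Submodule.mem_map_of_mem (f := d) hf
  rw [Submodule.map_smul''] at this
  exact Submodule.smul_mono le_rfl le_top this

lemma mem_sup_span_singleton_smul_top {M : Type*} [AddCommGroup M] [Module A M] {x : A} {f : M} :
    f ∈ (J ⊔ Ideal.span {x}) • (⊤ : Submodule A M) ↔
      ∃ b, f - x • b ∈ J • (⊤ : Submodule A M) := by
  rw [Submodule.sup_smul, Submodule.ideal_span_singleton_smul, Submodule.mem_sup]
  constructor
  · rintro ⟨g, hg, _, ⟨b, -, rfl⟩, rfl⟩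
    exact ⟨b, by simpa using hg⟩
  · rintro ⟨b, hb⟩
    exact ⟨_, hb, x • b, Submodule.smul_mem_pointwise_smul b x ⊤ trivial, sub_add_cancel _ _⟩

lemma mem_smul_top_of_smul_mem {x : A} (hx : IsSMulRegular (A ⧸ J) x) {f : ι →₀ A}
    (hf : x • f ∈ J • (⊤ : Submodule A (ι →₀ A))) : f ∈ J • (⊤ : Submodule A (ι →₀ A)) := by
  rw [mem_smul_top_iff_forall_apply_mem] at hf ⊢
  exact fun y => mem_of_isSMulRegular_quotient_of_smul_mem hx (hf y)

lemma mk_mem_smul_top_iff {I : Ideal A} {f : A} :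
    Ideal.Quotient.mk I f ∈ J • (⊤ : Submodule A (A ⧸ I)) ↔ f ∈ I ⊔ J := by
  have map_J : J • (⊤ : Submodule A (A ⧸ I)) = Submodule.map (Submodule.mkQ I) J := by
    rw [← Submodule.range_mkQ I, ← Submodule.map_top, ← Submodule.map_smul'', Ideal.smul_eq_mul,
      Ideal.mul_top]
  rw [map_J]
  rw [← Submodule.comap_map_mkQ]
  rfl

end SmulTop

section Homogeneous

variable {k : Type} [Field k] {σ : Type} {ι : Type}

lemma isHomogeneous_iff_intComponent_mem {J : Ideal (MvPolynomial σ k)} :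
    J.IsHomogeneous (homogeneousSubmodule σ k) ↔ ∀ p ∈ J, ∀ z, intComponent z p ∈ J := by
  refine ⟨fun hJ p hp z => ?_, fun hJ m p hp => ?_⟩
  · rcases lt_or_ge z 0 with hz | hz
    · rw [intComponent_of_neg hz]; exact J.zero_mem
    · lift z to ℕ using hz
      rw [intComponent_natCast]; exact homogeneousComponent_mem_of_mem hJ hp z
  · have := hJ p hp m
    rwa [intComponent_natCast, ← decomposition.decompose'_apply] at this

lemma freeComponent_mem_smul_top {J : Ideal (MvPolynomial σ k)}
    (hJ : J.IsHomogeneous (homogeneousSubmodule σ k)) (w : ι → ℤ) (D : ℤ)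
    {f : ι →₀ MvPolynomial σ k} (hf : f ∈ J • (⊤ : Submodule (MvPolynomial σ k) _)) :
    freeComponent w D f ∈ J • (⊤ : Submodule (MvPolynomial σ k) _) := by
  rw [mem_smul_top_iff_forall_apply_mem] at hf ⊢
  intro x
  rw [freeComponent_apply]
  exact isHomogeneous_iff_intComponent_mem.1 hJ _ (hf x) _

lemma freeComponent_smul {a : MvPolynomial σ k} {u : ℤ} (ha : HomogOfDeg k a u) (w : ι → ℤ)
    (D : ℤ) (f : ι →₀ MvPolynomial σ k) :
    freeComponent w D (a • f) = a • freeComponent w (D - u) f := by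
  ext1 x
  simp only [freeComponent_apply, Finsupp.smul_apply, smul_eq_mul]
  rw [mul_comm, intComponent_mul_of_homogOfDeg ha, mul_comm, sub_right_comm]

lemma exists_of_mem_quotDeg {N : ℕ} {I : Ideal (MvPolynomial (Fin N) k)} {D : ℤ}
    {y : MvPolynomial (Fin N) k ⧸ I} (hy : y ∈ quotDeg k I D) :
    ∃ p, HomogOfDeg k p D ∧ Ideal.Quotient.mk I p = y := by
  rw [quotDeg] at hy
  split_ifs at hy with hD
  · lift D to ℕ using hD
    obtain ⟨p, hp, rfl⟩ := hy
    exact ⟨p, .inr ⟨D, rfl, hp⟩, rfl⟩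
  · exact ⟨0, .inl rfl, by rw [(Submodule.mem_bot k).1 hy, map_zero]⟩

lemma mk_mem_quotDeg {N : ℕ} (I : Ideal (MvPolynomial (Fin N) k)) {D : ℤ}
    {p : MvPolynomial (Fin N) k} (hp : HomogOfDeg k p D) :
    Ideal.Quotient.mk I p ∈ quotDeg k I D := by
  rcases hp with rfl | ⟨m, rfl, hp⟩
  · rw [map_zero]; exact Submodule.zero_mem _
  · rw [quotDeg, if_pos (Int.natCast_nonneg m)]
    exact ⟨p, hp, rfl⟩

end Homogeneous

/-! ### Betti numbers of a minimal graded free resolution -/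

namespace MinGradedFreeRes

variable {k : Type} [Field k] {N : ℕ} {I : Ideal (MvPolynomial (Fin N) k)}
  (res : MinGradedFreeRes k (Fin N) (MvPolynomial (Fin N) k ⧸ I) (quotDeg k I))

/-- The internal degree of a generator of the `i`-th free module of a resolution. -/
def genDegree (i : ℕ) (x : (j : ℤ) × Fin (res.β i j)) : ℤ := i + x.1

lemma homogOfDeg_d (i : ℕ) (x y) :
    HomogOfDeg k (res.d i (Finsupp.single x 1) y)
      (res.genDegree (i + 1) x - res.genDegree i y) := by
  rw [show res.genDegree (i + 1) x - res.genDegree i y = x.1 + 1 - y.1 by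
    simp only [genDegree]; push_cast; ring]
  exact res.graded i x.1 y.1 x.2 y.2

lemma d_comp_d (i : ℕ) (c) : res.d i (res.d (i + 1) c) = 0 :=
  (res.exactSeq i).apply_apply_eq_zero c

lemma eps_comp_d (c) : res.ε (res.d 0 c) = 0 := res.exact0.apply_apply_eq_zero c

lemma constantCoeff_d_apply (i : ℕ) (c y) : constantCoeff (res.d i c y) = 0 := by
  induction c using Finsupp.induction_linear with
  | zero => simp
  | add f g hf hg => simp [hf, hg]
  | single x p =>
    rw [← Finsupp.smul_single_one, map_smul, Finsupp.smul_apply, smul_eq_mul, map_mul]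
    refine mul_eq_zero_of_right _ ?_
    rcases eq_or_ne y.1 (x.1 + 1) with hxy | hxy
    · rw [res.minimal i x.1 y.1 x.2 y.2 hxy, map_zero]
    · have := (res.graded i x.1 y.1 x.2 y.2).intComponent_eq 0
      rwa [if_neg (by omega), intComponent_zero, C_eq_zero] at this

lemma eps_mem_quotDeg {D : ℤ} {c : ((j : ℤ) × Fin (res.β 0 j)) →₀ MvPolynomial (Fin N) k}
    (hc : IsFreeHomogeneous (res.genDegree 0) D c) : res.ε c ∈ quotDeg k I D := by
  rw [← c.sum_single, map_finsuppSum]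
  refine Submodule.sum_mem _ fun x _ => ?_
  simp only
  obtain ⟨q, hq, hq_eps⟩ := exists_of_mem_quotDeg (res.eps_graded x.1 x.2)
  rw [← Finsupp.smul_single_one, map_smul, ← hq_eps]
  have := (hc x).mul hq
  rw [show D - res.genDegree 0 x + x.1 = D by simp [genDegree]] at this
  exact mk_mem_quotDeg I this

lemma exists_sub_d_mem_of_eps_mem {J : Ideal (MvPolynomial (Fin N) k)}
    {c : ((j : ℤ) × Fin (res.β 0 j)) →₀ MvPolynomial (Fin N) k}
    (hc : res.ε c ∈ J • (⊤ : Submodule (MvPolynomial (Fin N) k) (MvPolynomial (Fin N) k ⧸ I))) :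
    ∃ c', c - res.d 0 c' ∈ J • (⊤ : Submodule (MvPolynomial (Fin N) k) _) := by
  rw [← LinearMap.range_eq_top.2 res.eps_surj, ← Submodule.map_top, ← Submodule.map_smul''] at hc
  obtain ⟨f, hf, hfc⟩ := hc
  obtain ⟨c', hc'⟩ := (res.exact0 (c - f)).1 (by rw [map_sub, hfc, sub_self])
  exact ⟨c', by rwa [hc', sub_sub_cancel]⟩

/-! ### Exactness modulo a regular sequence of linear forms -/

/-- The resolution stays exact modulo `J` at the positive homological positions `i + 1`, in internal
degrees above `i + 1 + r`. This is the vanishing of the corresponding graded pieces of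
`Tor (S ⧸ I) (S ⧸ J)` when `S ⧸ J` is resolved by a Koszul complex of linear forms. -/
def ExactAbove (r : ℕ) (J : Ideal (MvPolynomial (Fin N) k)) : Prop :=
  ∀ (i : ℕ) (D : ℤ) (c), IsFreeHomogeneous (res.genDegree (i + 1)) D c → i + 1 + r < D →
    res.d i c ∈ J • (⊤ : Submodule (MvPolynomial (Fin N) k) _) →
      ∃ c', c - res.d (i + 1) c' ∈ J • (⊤ : Submodule (MvPolynomial (Fin N) k) _)

lemma exactAbove_bot (r : ℕ) : res.ExactAbove r ⊥ := fun i D c _ _ hc => by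
  simp only [Submodule.bot_smul, Submodule.mem_bot] at hc ⊢
  obtain ⟨c', rfl⟩ := (res.exactSeq i c).1 hc
  exact ⟨c', sub_self _⟩

variable {res} {r : ℕ} {J : Ideal (MvPolynomial (Fin N) k)} {x : MvPolynomial (Fin N) k}

lemma ExactAbove.exists_sub_d_mem (hJ : J.IsHomogeneous (homogeneousSubmodule (Fin N) k))
    (hex : res.ExactAbove r J) (hx : IsSMulRegular (MvPolynomial (Fin N) k ⧸ J) x)
    (hker : ∀ m, r < m → ∀ p, p.IsHomogeneous m → x * p ∈ I ⊔ J → p ∈ I ⊔ J) {i : ℕ} {D : ℤ}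
    (hD : i + r < D) {b} (hb : IsFreeHomogeneous (res.genDegree i) D b) {c}
    (hcb : res.d i c - x • b ∈ J • (⊤ : Submodule (MvPolynomial (Fin N) k) _)) :
    ∃ b', IsFreeHomogeneous (res.genDegree (i + 1)) D b' ∧
      b - res.d i b' ∈ J • (⊤ : Submodule (MvPolynomial (Fin N) k) _) := by
  suffices ∃ b', b - res.d i b' ∈ J • (⊤ : Submodule (MvPolynomial (Fin N) k) _) by
    obtain ⟨b', hb'⟩ := this
    refine ⟨freeComponent _ D b', isFreeHomogeneous_freeComponent _ _ _, ?_⟩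
    have mem := freeComponent_mem_smul_top hJ (res.genDegree i) D hb'
    rwa [map_sub, hb.freeComponent_eq, ← freeComponent_comm (res.d i) (res.homogOfDeg_d i)] at mem
  obtain _ | i := i
  · obtain ⟨p, hp, hp_eps⟩ := exists_of_mem_quotDeg (res.eps_mem_quotDeg hb)
    lift D to ℕ using by omega
    refine res.exists_sub_d_mem_of_eps_mem ?_
    have mem := map_mem_smul_top res.ε hcb
    rw [map_sub, eps_comp_d, zero_sub, neg_mem_iff, map_smul, ← hp_eps] at mem
    rw [← hp_eps, mk_mem_smul_top_iff]
    exact hker D (by omega) p hp.isHomogeneous (mk_mem_smul_top_iff.1 mem)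
  · refine hex i D b hb (by omega) (mem_smul_top_of_smul_mem hx ?_)
    have mem := map_mem_smul_top (res.d i) hcb
    rwa [map_sub, d_comp_d, zero_sub, neg_mem_iff, map_smul] at mem

lemma ExactAbove.sup_span_singleton (hJ : J.IsHomogeneous (homogeneousSubmodule (Fin N) k))
    (hex : res.ExactAbove r J) (hx₁ : x.IsHomogeneous 1)
    (hx : IsSMulRegular (MvPolynomial (Fin N) k ⧸ J) x)
    (hker : ∀ m, r < m → ∀ p, p.IsHomogeneous m → x * p ∈ I ⊔ J → p ∈ I ⊔ J) :
    res.ExactAbove r (J ⊔ Ideal.span {x}) := by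
  intro i D c hc hD hdc
  have hx₁' : HomogOfDeg k x 1 := .inr ⟨1, rfl, hx₁⟩
  obtain ⟨b₀, hb₀⟩ := mem_sup_span_singleton_smul_top.1 hdc
  let b := freeComponent (res.genDegree i) (D - 1) b₀
  have hb : res.d i c - x • b ∈ J • (⊤ : Submodule (MvPolynomial (Fin N) k) _) := by
    rw [← (hc.map (res.homogOfDeg_d i)).freeComponent_eq, ← freeComponent_smul hx₁', ← map_sub]
    exact freeComponent_mem_smul_top hJ _ D hb₀
  obtain ⟨b', hb'_hom, hb'⟩ := hex.exists_sub_d_mem hJ hx hker (by omega)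
    (isFreeHomogeneous_freeComponent _ _ b₀) hb
  have hom : IsFreeHomogeneous (res.genDegree (i + 1)) D (c - x • b') := by
    rw [← hc.freeComponent_eq, ← hb'_hom.freeComponent_eq, ← freeComponent_smul hx₁', ← map_sub]
    exact isFreeHomogeneous_freeComponent _ _ _
  have mem : res.d i (c - x • b') ∈ J • (⊤ : Submodule (MvPolynomial (Fin N) k) _) := by
    rw [show res.d i (c - x • b') = (res.d i c - x • b) + x • (b - res.d i b') by
      rw [map_sub, map_smul, smul_sub]; abel]
    exact add_mem hb (Submodule.smul_mem _ x hb')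
  obtain ⟨c', hc'⟩ := hex i D _ hom hD mem
  refine ⟨c', mem_sup_span_singleton_smul_top.2 ⟨b', ?_⟩⟩
  rwa [sub_right_comm]

end MinGradedFreeRes

/-! ### Linear changes of coordinates -/

section LinearChange

variable {k : Type*} [Field k] {σ τ : Type*}

/-- `φ` is a linear change of coordinates: the new coordinates `φ (X t)` are linear forms. -/
def IsLinearChange (φ : MvPolynomial τ k ≃ₐ[k] MvPolynomial σ k) : Prop :=
  ∀ t, (φ (X t)).IsHomogeneous 1

variable {φ : MvPolynomial τ k ≃ₐ[k] MvPolynomial σ k}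

lemma IsLinearChange.map_isHomogeneous (hφ : IsLinearChange φ) {p : MvPolynomial τ k} {d : ℕ}
    (hp : p.IsHomogeneous d) : (φ p).IsHomogeneous d := by
  have φ_eq : φ p = aeval (fun t => φ (X t)) p :=
    DFunLike.congr_fun (aeval_unique (φ : MvPolynomial τ k →ₐ[k] MvPolynomial σ k)) p
  rw [φ_eq, ← one_mul d]
  exact hp.aeval _ hφ

lemma IsLinearChange.map_homogeneousComponent (hφ : IsLinearChange φ) (d : ℕ)
    (p : MvPolynomial τ k) : homogeneousComponent d (φ p) = φ (homogeneousComponent d p) := by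
  induction p using MvPolynomial.induction_on' with
  | add p q hp hq => simp only [map_add, hp, hq]
  | monomial m a =>
    have hom : (monomial m a).IsHomogeneous m.degree := isHomogeneous_monomial a rfl
    rw [homogeneousComponent_of_mem (hφ.map_isHomogeneous hom), homogeneousComponent_of_mem hom,
      apply_ite φ, map_zero]

lemma IsLinearChange.symm_isHomogeneous (hφ : IsLinearChange φ) {p : MvPolynomial σ k} {d : ℕ}
    (hp : p.IsHomogeneous d) : (φ.symm p).IsHomogeneous d := by
  have component_eq : homogeneousComponent d (φ.symm p) = φ.symm p := φ.injective <| by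
    rw [← hφ.map_homogeneousComponent, φ.apply_symm_apply, homogeneousComponent_of_mem hp,
      if_pos rfl]
  exact component_eq ▸ homogeneousComponent_isHomogeneous d _

lemma isHomogeneous_span_of_linear {T : Set (MvPolynomial σ k)}
    (hT : ∀ x ∈ T, x.IsHomogeneous 1) :
    (Ideal.span T).IsHomogeneous (homogeneousSubmodule σ k) :=
  Ideal.homogeneous_span _ T fun x hx => ⟨1, hT x hx⟩

lemma map_span_X_image (φ : MvPolynomial τ k ≃ₐ[k] MvPolynomial σ k) (s : Set τ) :
    (Ideal.span (X '' s)).map φ = Ideal.span ((fun t => φ (X t)) '' s) := by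
  rw [Ideal.map_span, ← Set.image_comp]; rfl

lemma mem_span_X_image_of_X_mul_mem {s : Set τ} {t : τ} (ht : t ∉ s) {f : MvPolynomial τ k}
    (hf : X t * f ∈ Ideal.span (X '' s : Set (MvPolynomial τ k))) :
    f ∈ Ideal.span (X '' s : Set (MvPolynomial τ k)) := by
  rw [mem_ideal_span_X_image] at hf ⊢
  intro m hm
  obtain ⟨i, hi, m_ne⟩ := hf (Finsupp.single t 1 + m) <| by
    rwa [mem_support_iff, coeff_X_mul, ← mem_support_iff]
  refine ⟨i, hi, ?_⟩
  rwa [Finsupp.add_apply, Finsupp.single_eq_of_ne (ne_of_mem_of_not_mem hi ht), zero_add] at m_ne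

lemma mem_span_image_iff {φ : MvPolynomial τ k ≃ₐ[k] MvPolynomial σ k} {s : Set τ}
    {f : MvPolynomial σ k} :
    f ∈ Ideal.span ((fun t => φ (X t)) '' s) ↔ φ.symm f ∈ Ideal.span (X '' s) := by
  rw [← map_span_X_image, Ideal.mem_map_of_equiv]
  exact ⟨fun ⟨p, hp, p_eq⟩ => p_eq ▸ (φ.symm_apply_apply p).symm ▸ hp,
    fun hf => ⟨_, hf, φ.apply_symm_apply f⟩⟩

lemma isSMulRegular_quotient_span_image (φ : MvPolynomial τ k ≃ₐ[k] MvPolynomial σ k) {s : Set τ}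
    {t : τ} (ht : t ∉ s) :
    IsSMulRegular (MvPolynomial σ k ⧸ Ideal.span ((fun t => φ (X t)) '' s)) (φ (X t)) := by
  refine (isSMulRegular_quotient_iff_mem_of_smul_mem _ _).2 fun f hf => ?_
  rw [mem_span_image_iff] at hf ⊢
  rw [smul_eq_mul, map_mul, φ.symm_apply_apply] at hf
  exact mem_span_X_image_of_X_mul_mem ht hf

lemma mem_idealOfVars_of_isHomogeneous_one {x : MvPolynomial σ k} (hx : x.IsHomogeneous 1) :
    x ∈ idealOfVars σ k := by
  rw [mem_idealOfVars_iff, constantCoeff_eq]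
  exact hx.coeff_eq_zero (by simp)

lemma IsLinearChange.span_range (hφ : IsLinearChange φ) :
    Ideal.span (Set.range fun t => φ (X t)) = idealOfVars σ k := by
  refine le_antisymm (Ideal.span_le.2 ?_) (Ideal.span_le.2 ?_)
  · rintro _ ⟨t, rfl⟩
    exact mem_idealOfVars_of_isHomogeneous_one (hφ t)
  · rintro _ ⟨i, rfl⟩
    have mem := Ideal.mem_map_of_mem φ
      (mem_idealOfVars_of_isHomogeneous_one (hφ.symm_isHomogeneous (isHomogeneous_X k i)))
    rwa [idealOfVars, ← Set.image_univ, map_span_X_image, Set.image_univ, φ.apply_symm_apply]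
      at mem

end LinearChange

/-! ### Bounds on Betti numbers -/

namespace MinGradedFreeRes

variable {k : Type} [Field k] {N : ℕ} {I : Ideal (MvPolynomial (Fin N) k)}
  {res : MinGradedFreeRes k (Fin N) (MvPolynomial (Fin N) k ⧸ I) (quotDeg k I)} {r : ℕ}

section Upper

variable {τ : Type*} {φ : MvPolynomial τ k ≃ₐ[k] MvPolynomial (Fin N) k}

lemma ExactAbove.span_union (hφ : IsLinearChange φ) {s₀ : Set τ}
    (hex : res.ExactAbove r (Ideal.span ((fun t => φ (X t)) '' s₀))) (s : Finset τ)
    (hker : ∀ s' ⊆ (s : Set τ), ∀ t ∈ s, t ∉ s₀ ∪ s' → ∀ m, r < m → ∀ p, p.IsHomogeneous m →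
      φ (X t) * p ∈ I ⊔ Ideal.span ((fun t => φ (X t)) '' (s₀ ∪ s')) →
        p ∈ I ⊔ Ideal.span ((fun t => φ (X t)) '' (s₀ ∪ s'))) :
    res.ExactAbove r (Ideal.span ((fun t => φ (X t)) '' (s₀ ∪ s))) := by
  classical
  induction s using Finset.induction_on with
  | empty => simpa only [Finset.coe_empty, Set.union_empty] using hex
  | insert t s _ ih =>
    have hs : (s : Set τ) ⊆ ↑(insert t s) := Finset.coe_subset.2 (Finset.subset_insert t s)
    replace ih := ih fun s' hs' u hu => hker s' (hs'.trans hs) u (Finset.mem_insert_of_mem hu)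
    rw [Finset.coe_insert, Set.union_insert]
    by_cases ht : t ∈ s₀ ∪ s
    · rwa [Set.insert_eq_of_mem ht]
    rw [Set.image_insert_eq, Ideal.span_insert, sup_comm]
    refine ih.sup_span_singleton (isHomogeneous_span_of_linear ?_) (hφ t)
      (isSMulRegular_quotient_span_image φ ht) (hker s (by simp) t (by simp) ht)
    exact Set.forall_mem_image.2 fun u _ => hφ u

lemma le_of_exactAbove_idealOfVars (hex : res.ExactAbove r (idealOfVars (Fin N) k)) {i : ℕ} {j : ℤ}
    (hβ : res.β (i + 1) j ≠ 0) : j ≤ r := by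
  by_contra! hj
  let x : (j : ℤ) × Fin (res.β (i + 1) j) := ⟨j, 0, Nat.pos_of_ne_zero hβ⟩
  have deg_x : res.genDegree (i + 1) x = i + 1 + j := by simp [genDegree, x]
  obtain ⟨c, hc⟩ := hex i (i + 1 + j) (Finsupp.single x 1)
    (.single x (.inr ⟨0, by rw [deg_x, sub_self]; rfl, isHomogeneous_one _ _⟩)) (by omega)
    (mem_smul_top_iff_forall_apply_mem.2 fun y =>
      mem_idealOfVars_iff.2 (res.constantCoeff_d_apply i _ y))
  have := mem_idealOfVars_iff.1 (mem_smul_top_iff_forall_apply_mem.1 hc x)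
  simp [constantCoeff_d_apply] at this

lemma le_of_isSMulRegular [Finite τ] (hφ : IsLinearChange φ) (s : Finset τ)
    (hreg : ∀ s' ⊆ (s : Set τ), ∀ t ∈ s, t ∉ s' →
      IsSMulRegular (MvPolynomial (Fin N) k ⧸ I ⊔ Ideal.span ((fun t => φ (X t)) '' s'))
        (φ (X t)))
    (hmem : ∀ m, r < m → ∀ p : MvPolynomial (Fin N) k, p.IsHomogeneous m →
      p ∈ I ⊔ Ideal.span ((fun t => φ (X t)) '' s)) {i : ℕ} {j : ℤ} (hβ : res.β (i + 1) j ≠ 0) :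
    j ≤ r := by
  -- Compare with the Koszul resolution of the residue field: the coordinates in `s` are regular on
  -- `S ⧸ I`, and modulo them `S ⧸ I` vanishes above degree `r`.
  have := Fintype.ofFinite τ
  have exact_empty : res.ExactAbove r (Ideal.span ((fun t => φ (X t)) '' ∅)) := by
    rw [Set.image_empty, Ideal.span_empty]; exact res.exactAbove_bot r
  have exact_s := exact_empty.span_union hφ s fun s' hs' t ht hts' m _ p _ hp => by
    rw [Set.empty_union] at hts' hp ⊢
    exact (isSMulRegular_quotient_iff_mem_of_smul_mem _ _).1 (hreg s' hs' t ht hts') p hp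
  rw [Set.empty_union] at exact_s
  have exact_univ := exact_s.span_union hφ Finset.univ fun s' _ _ _ _ m hm p hp _ =>
    sup_le_sup_left (Ideal.span_mono (Set.image_mono Set.subset_union_left)) I (hmem m hm p hp)
  rw [Finset.coe_univ, Set.union_univ, Set.image_univ, hφ.span_range] at exact_univ
  exact le_of_exactAbove_idealOfVars exact_univ hβ

end Upper

section Lower

lemma constantCoeff_apply_of_eps_eq_zero {c} (hc : res.ε c = 0) (x) : constantCoeff (c x) = 0 := by
  obtain ⟨c', rfl⟩ := (res.exact0 c).1 hc
  exact res.constantCoeff_d_apply 0 c' x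

lemma d_single_ne_zero (i : ℕ) (x) : res.d i (Finsupp.single x 1) ≠ 0 := fun hx => by
  obtain ⟨c, hc⟩ := (res.exactSeq i _).1 hx
  have := res.constantCoeff_d_apply (i + 1) c x
  simp [hc] at this

lemma constantCoeff_mul_constantCoeff {u} (hu : res.ε u = 1) {x} {a : MvPolynomial (Fin N) k}
    (ha : Ideal.Quotient.mk I a = res.ε (Finsupp.single x 1)) (y) :
    constantCoeff a * constantCoeff (u y) =
      constantCoeff (Finsupp.single x (1 : MvPolynomial (Fin N) k) y) := by
  have smul_one : a • (1 : MvPolynomial (Fin N) k ⧸ I) = Ideal.Quotient.mk I a :=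
    congrArg (Ideal.Quotient.mk I) (mul_one a)
  have relation : res.ε (a • u - Finsupp.single x 1) = 0 := by
    rw [map_sub, map_smul, hu, smul_one, ← ha, sub_self]
  have := constantCoeff_apply_of_eps_eq_zero relation y
  rwa [Finsupp.sub_apply, map_sub, Finsupp.smul_apply, smul_eq_mul, map_mul, sub_eq_zero] at this

lemma constantCoeff_ne_zero {x} {a : MvPolynomial (Fin N) k}
    (ha : Ideal.Quotient.mk I a = res.ε (Finsupp.single x 1)) : constantCoeff a ≠ 0 := fun h => by
  obtain ⟨u, hu⟩ := res.eps_surj 1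
  have := constantCoeff_mul_constantCoeff hu ha x
  simp [h] at this

lemma eq_zero_of_gen_zero (x : (j : ℤ) × Fin (res.β 0 j)) : x.1 = 0 := by
  obtain ⟨a, ha_hom, ha⟩ := exists_of_mem_quotDeg (res.eps_graded x.1 x.2)
  by_contra hx
  have := ha_hom.intComponent_eq 0
  rw [if_neg (Ne.symm hx), intComponent_zero, C_eq_zero] at this
  exact constantCoeff_ne_zero ha this

lemma subsingleton_gen_zero : Subsingleton ((j : ℤ) × Fin (res.β 0 j)) := by
  refine ⟨fun x y => by_contra fun hxy => ?_⟩
  obtain ⟨u, hu⟩ := res.eps_surj 1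
  obtain ⟨a, -, ha⟩ := exists_of_mem_quotDeg (res.eps_graded x.1 x.2)
  obtain ⟨b, -, hb⟩ := exists_of_mem_quotDeg (res.eps_graded y.1 y.2)
  have mul_eq_zero' := constantCoeff_mul_constantCoeff hu ha y
  have mul_eq_one := constantCoeff_mul_constantCoeff hu hb y
  rw [Finsupp.single_eq_of_ne (Ne.symm hxy), map_zero] at mul_eq_zero'
  rw [(mul_eq_zero.1 mul_eq_zero').resolve_left (constantCoeff_ne_zero ha)] at mul_eq_one
  simp at mul_eq_one

lemma le_of_gen_one (hlow : ∀ d ≤ r, ∀ f ∈ I, f.IsHomogeneous d → f = 0)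
    (x : (j : ℤ) × Fin (res.β 1 j)) : (r : ℤ) ≤ x.1 := by
  by_contra! hx
  obtain ⟨y, hy⟩ := Finsupp.ne_iff.1 (res.d_single_ne_zero 0 x)
  rw [Finsupp.zero_apply] at hy
  set g := res.d 0 (Finsupp.single x 1) y
  obtain ⟨a, ha_hom, ha⟩ := exists_of_mem_quotDeg (res.eps_graded y.1 y.2)
  have hga_mem : g * a ∈ I := by
    have d_eq : res.d 0 (Finsupp.single x 1) = g • Finsupp.single y 1 := by
      ext1 z
      rw [res.subsingleton_gen_zero.elim z y, Finsupp.smul_apply, Finsupp.single_eq_same,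
        smul_eq_mul, mul_one]
    rw [← Ideal.Quotient.eq_zero_iff_mem, ← res.eps_comp_d (Finsupp.single x 1), d_eq, map_smul,
      ← ha]
    rfl
  have hga_hom : HomogOfDeg k (g * a) (x.1 + 1) := by
    simpa using (res.graded 0 x.1 y.1 x.2 y.2).mul ha_hom
  have hga : g * a ≠ 0 :=
    mul_ne_zero hy fun h => constantCoeff_ne_zero ha (by rw [h, map_zero])
  rcases hga_hom with h | ⟨m, hm, h⟩
  · exact hga h
  · exact hga (hlow m (by omega) _ hga_mem h)

lemma le_of_forms_eq_zero (hlow : ∀ d ≤ r, ∀ f ∈ I, f.IsHomogeneous d → f = 0) (i : ℕ)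
    (x : (j : ℤ) × Fin (res.β (i + 1) j)) : (r : ℤ) ≤ x.1 := by
  induction i with
  | zero => exact le_of_gen_one hlow x
  | succ i ih =>
    obtain ⟨y, hy⟩ := Finsupp.ne_iff.1 (res.d_single_ne_zero (i + 1) x)
    refine (ih y).trans ?_
    rw [Finsupp.zero_apply] at hy
    have deg_nonneg : 0 ≤ x.1 + 1 - y.1 :=
      not_lt.1 fun h => hy ((res.graded (i + 1) x.1 y.1 x.2 y.2).eq_zero_of_neg h)
    have deg_ne : y.1 ≠ x.1 + 1 := fun h => hy (res.minimal (i + 1) x.1 y.1 x.2 y.2 h)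
    omega

lemma forms_eq_zero_of_le (hI_top : I ≠ ⊤) (hle : ∀ j, res.β 1 j ≠ 0 → (r : ℤ) ≤ j) :
    ∀ d ≤ r, ∀ f ∈ I, f.IsHomogeneous d → f = 0 := by
  intro d hd f hf hf_hom
  by_contra hf_ne
  have := Ideal.Quotient.nontrivial_iff.2 hI_top
  obtain ⟨u, hu⟩ := res.eps_surj 1
  have hu_ne : u ≠ 0 := fun h => zero_ne_one <| by rw [← hu, h, map_zero]
  obtain ⟨y, -⟩ := Finsupp.ne_iff.1 hu_ne
  obtain ⟨a, -, ha⟩ := exists_of_mem_quotDeg (res.eps_graded y.1 y.2)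
  obtain ⟨c, hc⟩ := (res.exact0 (f • u)).1 <| by
    rw [map_smul, hu]
    exact Ideal.Quotient.eq_zero_iff_mem.2 (I.mul_mem_right 1 hf)
  have component_c : freeComponent (res.genDegree 1) d c = 0 := by
    ext1 x
    have := hle x.1 x.2.pos.ne'
    rw [freeComponent_apply, intComponent_of_neg (by simp only [genDegree]; omega),
      Finsupp.zero_apply]
  have component_u : f • freeComponent (res.genDegree 0) 0 u = 0 := by
    rw [← sub_self (d : ℤ), ← freeComponent_smul (.inr ⟨d, rfl, hf_hom⟩), ← hc,
      ← freeComponent_comm (res.d 0) (res.homogOfDeg_d 0), component_c, map_zero]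
  have constantCoeff_u : constantCoeff (u y) = 0 := by
    have := DFunLike.congr_fun ((smul_eq_zero.1 component_u).resolve_left hf_ne) y
    rwa [freeComponent_apply, genDegree, eq_zero_of_gen_zero, Nat.cast_zero, add_zero, sub_self,
      intComponent_zero, Finsupp.zero_apply, C_eq_zero] at this
  have := constantCoeff_mul_constantCoeff hu ha y
  simp [constantCoeff_u] at this

end Lower

end MinGradedFreeRes

/-! ### Coordinates adapted to a set of linear forms -/

section Coordinates

variable {k : Type*} [Field k]

lemma exists_basis_inl_eq {M : Type*} [AddCommGroup M] [Module k M] [Module.Finite k M] {a b : ℕ}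
    (hM : Module.finrank k M = a + b) {v : Fin a → M} (hv : LinearIndependent k v) :
    ∃ B : Module.Basis (Fin a ⊕ Fin b) k M, ∀ i, B (Sum.inl i) = v i := by
  obtain ⟨W, hW⟩ := (Submodule.span k (Set.range v)).exists_isCompl
  have finrank_W : Module.finrank k W = b := by
    have := Submodule.finrank_add_eq_of_isCompl hW
    rw [hM, finrank_span_eq_card hv, Fintype.card_fin] at this
    exact Nat.add_left_cancel this
  refine ⟨((Module.Basis.span hv).prod (Module.finBasisOfFinrankEq k W finrank_W)).map
    (Submodule.prodEquivOfIsCompl _ W hW), fun i => ?_⟩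
  simp [Module.Basis.span_apply]

lemma exists_basis_span_le {M : Type*} [AddCommGroup M] [Module k M] [Module.Finite k M] {a b : ℕ}
    (hM : Module.finrank k M = a + b) (V : Submodule k M) (hV : Module.finrank k V ≤ a) :
    ∃ B : Module.Basis (Fin a ⊕ Fin b) k M,
      V ≤ Submodule.span k (Set.range fun i => B (Sum.inl i)) := by
  obtain ⟨c, rfl⟩ := Nat.exists_eq_add_of_le hV
  obtain ⟨B, hB⟩ := exists_basis_inl_eq (b := c + b) (by rw [hM, add_assoc])
    ((Module.finBasis k V).linearIndependent.map' V.subtype V.ker_subtype)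
  let reassoc : Fin (Module.finrank k V) ⊕ Fin (c + b) ≃ Fin (Module.finrank k V + c) ⊕ Fin b :=
    ((Equiv.refl _).sumCongr finSumFinEquiv.symm).trans <|
      (Equiv.sumAssoc _ _ _).symm.trans (finSumFinEquiv.sumCongr (Equiv.refl _))
  refine ⟨B.reindex reassoc, fun v hv => ?_⟩
  have mem_span := Submodule.mem_map_of_mem (f := V.subtype)
    ((Module.finBasis k V).mem_span ⟨v, hv⟩)
  rw [Submodule.map_span, ← Set.range_comp] at mem_span
  refine Submodule.span_mono (Set.range_subset_iff.2 fun i => ?_) mem_span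
  exact ⟨Fin.castAdd c i, by simp [reassoc, hB]⟩

/-- The variables, as a basis of the space of linear forms. -/
def linearFormBasis (σ k : Type*) [Field k] : Module.Basis σ k (homogeneousSubmodule σ k 1) :=
  (Module.Basis.span (linearIndependent_X σ k)).map
    (LinearEquiv.ofEq _ _ homogeneousSubmodule_one_eq_span_X.symm)

lemma coe_linearFormBasis {σ : Type*} (i : σ) :
    (linearFormBasis σ k i : MvPolynomial σ k) = X i := by
  rw [linearFormBasis, Module.Basis.map_apply, LinearEquiv.coe_ofEq_apply, Module.Basis.span_apply]

lemma exists_algEquiv_of_basis {σ τ : Type*} (B : Module.Basis τ k (homogeneousSubmodule σ k 1)) :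
    ∃ φ : MvPolynomial τ k ≃ₐ[k] MvPolynomial σ k, ∀ t, φ (X t) = B t := by
  let stdPoly := SymmetricAlgebra.equivMvPolynomial (linearFormBasis σ k)
  have stdPoly_ι : stdPoly.toLinearMap ∘ₗ SymmetricAlgebra.ι k _ = Submodule.subtype _ :=
    (linearFormBasis σ k).ext fun i => by
      rw [LinearMap.comp_apply, AlgEquiv.toLinearMap_apply,
        SymmetricAlgebra.equivMvPolynomial_ι_apply, Submodule.subtype_apply, coe_linearFormBasis]
  refine ⟨(SymmetricAlgebra.equivMvPolynomial B).symm.trans stdPoly, fun t => ?_⟩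
  rw [AlgEquiv.trans_apply, SymmetricAlgebra.equivMvPolynomial_symm_X]
  exact LinearMap.congr_fun stdPoly_ι (B t)

variable {σ : Type*}

instance [Finite σ] : Module.Finite k (homogeneousSubmodule σ k 1) :=
  .of_basis (linearFormBasis σ k)

variable [Fintype σ] {a b : ℕ}

lemma finrank_homogeneousSubmodule_one :
    Module.finrank k (homogeneousSubmodule σ k 1) = Fintype.card σ :=
  Module.finrank_eq_card_basis (linearFormBasis σ k)

lemma exists_linearChange_of_linearIndependent (hσ : Fintype.card σ = a + b)
    {l : Fin a → MvPolynomial σ k} (hl : ∀ i, (l i).IsHomogeneous 1) (hli : LinearIndependent k l) :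
    ∃ φ : MvPolynomial (Fin a ⊕ Fin b) k ≃ₐ[k] MvPolynomial σ k, IsLinearChange φ ∧
      ∀ i, φ (X (Sum.inl i)) = l i := by
  have independent : LinearIndependent k fun i => (⟨l i, hl i⟩ : homogeneousSubmodule σ k 1) :=
    .of_comp (Submodule.subtype _) hli
  obtain ⟨B, hB⟩ := exists_basis_inl_eq (finrank_homogeneousSubmodule_one.trans hσ) independent
  obtain ⟨φ, hφ⟩ := exists_algEquiv_of_basis B
  exact ⟨φ, fun t => hφ t ▸ (B t).2, fun i => by rw [hφ, hB]⟩

lemma exists_linearChange_span_le (hσ : Fintype.card σ = a + b)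
    {v : Fin a → MvPolynomial σ k} (hv : ∀ i, (v i).IsHomogeneous 1) :
    ∃ φ : MvPolynomial (Fin a ⊕ Fin b) k ≃ₐ[k] MvPolynomial σ k, IsLinearChange φ ∧
      Ideal.span (Set.range v) ≤ Ideal.span (Set.range fun i => φ (X (Sum.inl i))) := by
  obtain ⟨B, hB⟩ := exists_basis_span_le (finrank_homogeneousSubmodule_one.trans hσ)
    (Submodule.span k (Set.range fun i => ⟨v i, hv i⟩))
    ((finrank_range_le_card _).trans_eq (Fintype.card_fin a))
  obtain ⟨φ, hφ⟩ := exists_algEquiv_of_basis B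
  refine ⟨φ, fun t => hφ t ▸ (B t).2, Ideal.span_le.2 ?_⟩
  rintro _ ⟨i, rfl⟩
  have mem_span := Submodule.mem_map_of_mem (f := Submodule.subtype _)
    (hB (Submodule.subset_span (Set.mem_range_self i)))
  rw [Submodule.map_span, ← Set.range_comp] at mem_span
  simp only [hφ]
  exact Submodule.span_le_restrictScalars k _ _ mem_span

end Coordinates

/-! ### Polynomials of bounded degree in the complementary coordinates -/

section BoundedPart

variable {k : Type*} [Field k] {α β σ : Type*} {φ : MvPolynomial (α ⊕ β) k ≃ₐ[k] MvPolynomial σ k}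
  {r d : ℕ} {w : MvPolynomial σ k}

/-- The exponents on `α ⊕ β` of total degree at most `r` in the variables of `β`. -/
def boundedExponents (α β : Type*) (r : ℕ) : Set (α ⊕ β →₀ ℕ) :=
  {m | (Finsupp.sumFinsuppAddEquivProdFinsupp m).2.degree ≤ r}

/-- The polynomials of degree at most `r` in the `β`-coordinates, where `φ` gives coordinates
indexed by `α ⊕ β`: the free module over the polynomials in the `α`-coordinates on the monomials of
degree at most `r` in the `β`-coordinates. -/
def boundedPart (φ : MvPolynomial (α ⊕ β) k ≃ₐ[k] MvPolynomial σ k) (r : ℕ) :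
    Submodule k (MvPolynomial σ k) :=
  (restrictSupport k (boundedExponents α β r)).comap φ.symm.toLinearMap

lemma mem_boundedPart_iff :
    w ∈ boundedPart φ r ↔ ∀ m ∈ (φ.symm w).support, m ∈ boundedExponents α β r :=
  mem_restrictSupport_iff k

lemma degree_eq_degree_inl_add_degree_inr (m : α ⊕ β →₀ ℕ) :
    m.degree = (Finsupp.sumFinsuppAddEquivProdFinsupp m).1.degree +
      (Finsupp.sumFinsuppAddEquivProdFinsupp m).2.degree := by
  induction m using Finsupp.induction_linear with
  | zero => simp
  | add f g hf hg => simp only [map_add, Prod.fst_add, Prod.snd_add, hf, hg]; ring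
  | single x a =>
    rcases x with i | j
    · have split_single : Finsupp.sumFinsuppAddEquivProdFinsupp
          (Finsupp.single (Sum.inl (β := β) i) a) = (Finsupp.single i a, 0) := by
        ext x <;> simp
      simp [split_single]
    · have split_single : Finsupp.sumFinsuppAddEquivProdFinsupp
          (Finsupp.single (Sum.inr (α := α) j) a) = (0, Finsupp.single j a) := by
        ext x <;> simp
      simp [split_single]

lemma mem_boundedPart_of_isHomogeneous (hφ : IsLinearChange φ) (hd : d ≤ r)
    (hw : w.IsHomogeneous d) : w ∈ boundedPart φ r := by
  refine mem_boundedPart_iff.2 fun m hm => ?_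
  have degree_m := (hφ.symm_isHomogeneous hw).degree_eq_sum_deg_support hm
  rw [← Finsupp.degree_apply, degree_eq_degree_inl_add_degree_inr] at degree_m
  exact (Nat.le_add_left _ _).trans (degree_m.ge.trans hd)

lemma homogeneousComponent_mem_boundedPart (hφ : IsLinearChange φ) (hw : w ∈ boundedPart φ r)
    (d : ℕ) : homogeneousComponent d w ∈ boundedPart φ r := by
  rw [mem_boundedPart_iff] at hw ⊢
  intro m hm
  rw [← φ.apply_symm_apply w, hφ.map_homogeneousComponent, φ.symm_apply_apply, mem_support_iff,
    coeff_homogeneousComponent] at hm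
  exact hw m (mem_support_iff.2 fun h => hm (by rw [h, ite_self]))

lemma rename_inl_mul_mem_boundedPart (u : MvPolynomial α k) (hw : w ∈ boundedPart φ r) :
    φ (rename Sum.inl u) * w ∈ boundedPart φ r := by
  classical
  rw [mem_boundedPart_iff] at hw ⊢
  intro m hm
  rw [map_mul, φ.symm_apply_apply] at hm
  obtain ⟨m₁, hm₁, m₂, hm₂, rfl⟩ := Finset.mem_add.1 (support_mul _ _ hm)
  rw [support_rename_of_injective Sum.inl_injective, Finset.mem_image] at hm₁
  obtain ⟨a, -, rfl⟩ := hm₁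
  have inr_part : (Finsupp.sumFinsuppAddEquivProdFinsupp
      (Finsupp.mapDomain (Sum.inl : α → α ⊕ β) a)).2 = 0 := by
    ext j
    exact Finsupp.mapDomain_of_notMem_range _ _ (by simp)
  rw [boundedExponents, Set.mem_ofPred, map_add, Prod.snd_add, inr_part, zero_add]
  exact hw m₂ hm₂

lemma X_inl_mul_mem_boundedPart (i : α) (hw : w ∈ boundedPart φ r) :
    φ (X (Sum.inl i)) * w ∈ boundedPart φ r := by
  simpa only [rename_X] using rename_inl_mul_mem_boundedPart (X i) hw

end BoundedPart

/-! ### Regular sequences modulo an ideal -/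

section RegularFamily

variable {A : Type*} [CommRing A] {I : Ideal A} {c : ℕ}

/-- `x₀, …, x_{c-1}` is a weakly regular sequence on `A ⧸ I`, in terms of ideals of `A`. -/
def IsRegularFamily (I : Ideal A) (x : Fin c → A) : Prop :=
  ∀ i, IsSMulRegular (A ⧸ I ⊔ Ideal.span (x '' Set.Iio i)) (x i)

lemma isSMulRegular_quotient_smul_top_iff {J : Ideal A} {x : A} :
    IsSMulRegular ((A ⧸ I) ⧸ (J • ⊤ : Submodule A (A ⧸ I))) x ↔ IsSMulRegular (A ⧸ I ⊔ J) x := by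
  rw [isSMulRegular_quotient_iff_mem_of_smul_mem, isSMulRegular_quotient_iff_mem_of_smul_mem,
    Ideal.Quotient.mk_surjective.forall]
  exact forall_congr' fun f => imp_congr mk_mem_smul_top_iff mk_mem_smul_top_iff

lemma isWeaklyRegular_ofFn_iff {x : Fin c → A} :
    RingTheory.Sequence.IsWeaklyRegular (A ⧸ I) (List.ofFn fun i => Ideal.Quotient.mk I (x i)) ↔
      IsRegularFamily I x := by
  have ofList_take (i : Fin c) : Ideal.ofList ((List.ofFn x).take i) =
      Ideal.span (x '' Set.Iio i) := by
    rw [Ideal.ofList, ← Fin.ofFn_take_eq_take_ofFn i.is_le']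
    congr 1
    ext a
    simp only [Set.mem_ofPred, List.mem_ofFn, Set.mem_image, Set.mem_Iio]
    exact ⟨fun ⟨j, hj⟩ => ⟨Fin.castLE i.is_le' j, j.is_lt, hj⟩,
      fun ⟨j, hj, hja⟩ => ⟨⟨j, hj⟩, hja⟩⟩
  have map_ofFn : List.ofFn (fun i => Ideal.Quotient.mk I (x i)) =
      (List.ofFn x).map (algebraMap A (A ⧸ I)) := (List.map_ofFn ..).symm
  rw [map_ofFn, RingTheory.Sequence.isWeaklyRegular_map_algebraMap_iff,
    RingTheory.Sequence.isWeaklyRegular_iff_Fin, (finCongr List.length_ofFn).forall_congr_left]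
  refine forall_congr' fun i => ?_
  rw [isSMulRegular_quotient_smul_top_iff, finCongr_symm, finCongr_apply_coe, Fin.getElem_fin,
    List.getElem_ofFn, ofList_take]
  rfl

end RegularFamily

section CohenMacaulay

variable {k : Type} [Field k] {N c : ℕ} {I : Ideal (MvPolynomial (Fin N) k)}

lemma irrelevantIdeal_eq_map :
    irrelevantIdeal k I = (idealOfVars (Fin N) k).map (Ideal.Quotient.mk I) := by
  rw [irrelevantIdeal, idealOfVars, Ideal.map_span, ← Set.range_comp]
  rfl

lemma irrelevantIdeal_ne_top (hI : IdealHomog k I) (hI_top : I ≠ ⊤) : irrelevantIdeal k I ≠ ⊤ := by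
  intro eq_top
  have one_mem : (1 : MvPolynomial (Fin N) k) ∈ idealOfVars (Fin N) k ⊔ I := by
    rw [← Ideal.mem_quotient_iff_mem_sup, ← irrelevantIdeal_eq_map, eq_top]
    exact Submodule.mem_top
  rw [sup_of_le_left (hI.le_idealOfVars hI_top), mem_idealOfVars_iff, map_one] at one_mem
  exact one_ne_zero one_mem

lemma isCMQuot_iff_exists_isRegularFamily (hI : IdealHomog k I) (hI_top : I ≠ ⊤) :
    IsCMQuot k I c ↔ ∃ x : Fin c → MvPolynomial (Fin N) k,
      (∀ i, x i ∈ idealOfVars (Fin N) k) ∧ IsRegularFamily I x := by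
  constructor
  · rintro ⟨rs, rfl, mem_irrelevant, regular⟩
    have exists_lift (i : Fin rs.length) :
        ∃ p ∈ idealOfVars (Fin N) k, Ideal.Quotient.mk I p = rs.get i := by
      have := mem_irrelevant _ (rs.get_mem i)
      rwa [irrelevantIdeal_eq_map, Ideal.mem_map_iff_of_surjective _ Ideal.Quotient.mk_surjective]
        at this
    choose x hx mk_x using exists_lift
    refine ⟨x, hx, isWeaklyRegular_ofFn_iff.1 ?_⟩
    simpa only [mk_x, List.ofFn_get] using regular.toIsWeaklyRegular
  · rintro ⟨x, hx, regular⟩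
    have mem_irrelevant : ∀ y ∈ List.ofFn fun i => Ideal.Quotient.mk I (x i),
        y ∈ irrelevantIdeal k I := by
      rw [List.forall_mem_ofFn_iff, irrelevantIdeal_eq_map]
      exact fun i => Ideal.mem_map_of_mem _ (hx i)
    refine ⟨_, List.length_ofFn, mem_irrelevant, isWeaklyRegular_ofFn_iff.2 regular, ?_⟩
    rw [smul_eq_mul, Ideal.mul_top]
    exact ((Ideal.span_le.2 mem_irrelevant).trans_lt
      (irrelevantIdeal_ne_top hI hI_top).lt_top).ne'

end CohenMacaulay

section Complement

variable {k : Type} [Field k] {α β σ : Type*} {r N : ℕ}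

lemma X_inl_mul_mem_sup_boundedPart {φ : MvPolynomial (α ⊕ β) k ≃ₐ[k] MvPolynomial σ k}
    {I : Ideal (MvPolynomial σ k)} (i : α) {p : MvPolynomial σ k}
    (hp : p ∈ I.restrictScalars k ⊔ boundedPart φ r) :
    φ (X (Sum.inl i)) * p ∈ I.restrictScalars k ⊔ boundedPart φ r := by
  obtain ⟨g, hg, w, hw, rfl⟩ := Submodule.mem_sup.1 hp
  rw [mul_add]
  exact Submodule.add_mem_sup (I.mul_mem_left _ hg) (X_inl_mul_mem_boundedPart i hw)

lemma codisjoint_boundedPart [Finite α] {I : Ideal (MvPolynomial (Fin N) k)}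
    {φ : MvPolynomial (α ⊕ β) k ≃ₐ[k] MvPolynomial (Fin N) k} (hφ : IsLinearChange φ)
    (hI : IdealHomog k I) (hmem : ∀ d, r < d → ∀ p : MvPolynomial (Fin N) k, p.IsHomogeneous d →
      p ∈ I ⊔ Ideal.span (Set.range fun i => φ (X (Sum.inl i)))) :
    Codisjoint (I.restrictScalars k) (boundedPart φ r) := by
  have := Fintype.ofFinite α
  suffices forms_mem : ∀ d, ∀ p : MvPolynomial (Fin N) k, p.IsHomogeneous d →
      p ∈ I.restrictScalars k ⊔ boundedPart φ r by
    rw [codisjoint_iff, eq_top_iff]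
    intro p _
    rw [← sum_homogeneousComponent p]
    exact Submodule.sum_mem _ fun d _ => forms_mem d _ (homogeneousComponent_isHomogeneous d p)
  intro d
  induction d with
  | zero =>
    exact fun p hp => Submodule.mem_sup_right (mem_boundedPart_of_isHomogeneous hφ r.zero_le hp)
  | succ d ih =>
    intro p hp
    rcases le_or_gt (d + 1) r with hd | hd
    · exact Submodule.mem_sup_right (mem_boundedPart_of_isHomogeneous hφ hd hp)
    obtain ⟨g, hg, q, hq, rfl⟩ := Submodule.mem_sup.1 (hmem _ hd p hp)
    obtain ⟨c, rfl⟩ := Ideal.mem_span_range_iff_exists_fun.1 hq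
    have component_eq := (HomogOfDeg.intComponent_eq (.inr ⟨d + 1, rfl, hp⟩) _).trans (if_pos rfl)
    rw [map_add, map_sum] at component_eq
    rw [← component_eq]
    refine add_mem (Submodule.mem_sup_left (hI.intComponent_mem hg _)) (sum_mem fun i _ => ?_)
    rw [intComponent_mul_of_homogOfDeg (.inr ⟨1, rfl, hφ _⟩), Nat.cast_succ, Nat.cast_one,
      add_sub_cancel_right, intComponent_natCast, mul_comm]
    exact X_inl_mul_mem_sup_boundedPart i (ih _ (homogeneousComponent_isHomogeneous d _))

variable {I : Ideal (MvPolynomial σ k)} {φ : MvPolynomial (α ⊕ β) k ≃ₐ[k] MvPolynomial σ k}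
  {s : Set (α ⊕ β)}

lemma span_image_le_sup_inf_boundedPart
    (hI : Codisjoint (I.restrictScalars k) (boundedPart φ r)) (hs : s ⊆ Set.range Sum.inl) :
    (Ideal.span ((fun t => φ (X t)) '' s)).restrictScalars k ≤ I.restrictScalars k ⊔
      (Ideal.span ((fun t => φ (X t)) '' s)).restrictScalars k ⊓ boundedPart φ r := by
  intro p hp
  refine Submodule.closure_induction (s := (fun t => φ (X t)) '' s) ?_ ?_ ?_ hp
  · exact zero_mem _
  · exact fun x y _ _ hx hy => add_mem hx hy
  rintro c _ ⟨t, ht, rfl⟩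
  obtain ⟨i, rfl⟩ := hs ht
  obtain ⟨g, hg, w, hw, rfl⟩ := Submodule.mem_sup.1 (hI.eq_top ▸ Submodule.mem_top : c ∈ _)
  rw [smul_eq_mul, add_mul]
  refine Submodule.add_mem_sup (I.mul_mem_right _ hg) ⟨?_, mul_comm w _ ▸ ?_⟩
  · exact Ideal.mul_mem_left _ _ (Ideal.subset_span ⟨_, ht, rfl⟩)
  · exact X_inl_mul_mem_boundedPart i hw

lemma isSMulRegular_of_isCompl_boundedPart
    (hI : IsCompl (I.restrictScalars k) (boundedPart φ r)) (hs : s ⊆ Set.range Sum.inl) {t : α}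
    (ht : Sum.inl t ∉ s) :
    IsSMulRegular (MvPolynomial σ k ⧸ I ⊔ Ideal.span ((fun t => φ (X t)) '' s))
      (φ (X (Sum.inl t))) := by
  refine (isSMulRegular_quotient_iff_mem_of_smul_mem _ _).2 fun f hf => ?_
  obtain ⟨g, hg, w, hw, rfl⟩ :=
    Submodule.mem_sup.1 (hI.codisjoint.eq_top ▸ Submodule.mem_top : f ∈ _)
  have mem_sup : φ (X (Sum.inl t)) * w ∈ I ⊔ Ideal.span ((fun t => φ (X t)) '' s) := by
    rw [smul_eq_mul, mul_add] at hf
    exact (Ideal.add_mem_iff_right _ (Ideal.mem_sup_left (I.mul_mem_left _ hg))).1 hf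
  obtain ⟨g', hg', q, hq, add_eq⟩ := Submodule.mem_sup.1 mem_sup
  obtain ⟨g'', hg'', q', ⟨hq', q'_bounded⟩, rfl⟩ :=
    Submodule.mem_sup.1 (span_image_le_sup_inf_boundedPart hI.codisjoint hs hq)
  have eq_q' : φ (X (Sum.inl t)) * w = q' := sub_eq_zero.1 <|
    Submodule.disjoint_def.1 hI.disjoint _
      (by rw [← add_eq, ← add_assoc, add_sub_cancel_right]; exact add_mem hg' hg'')
      (sub_mem (X_inl_mul_mem_boundedPart t hw) q'_bounded)
  exact add_mem (Ideal.mem_sup_left hg) <| Ideal.mem_sup_right <|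
    (isSMulRegular_quotient_iff_mem_of_smul_mem _ _).1
      (isSMulRegular_quotient_span_image φ ht) w (by rwa [smul_eq_mul, eq_q'])

end Complement

section Disjoint

variable {k : Type} [Field k] {α β σ τ : Type*} {r N : ℕ}

lemma sub_X_mul_divMonomial_mem_span_X_image {s : Set τ} {t : τ} {p : MvPolynomial τ k}
    (hp : p ∈ Ideal.span (X '' insert t s : Set (MvPolynomial τ k))) :
    p - X t * p.divMonomial (Finsupp.single t 1) ∈
      Ideal.span (X '' s : Set (MvPolynomial τ k)) := by
  classical
  have eq_mod : p - X t * p.divMonomial (Finsupp.single t 1) =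
      p.modMonomial (Finsupp.single t 1) :=
    sub_eq_iff_eq_add'.2 (divMonomial_add_modMonomial_single p t).symm
  rw [eq_mod, mem_ideal_span_X_image]
  intro m hm
  have not_le : ¬ Finsupp.single t 1 ≤ m := fun h =>
    mem_support_iff.1 hm (coeff_modMonomial_of_le p h)
  rw [mem_support_iff, coeff_modMonomial_of_not_le p not_le, ← mem_support_iff] at hm
  obtain ⟨i, rfl | hi, m_ne⟩ := mem_ideal_span_X_image.1 hp m hm
  · exact absurd (Finsupp.single_le_iff.2 (Nat.one_le_iff_ne_zero.2 m_ne)) not_le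
  · exact ⟨i, hi, m_ne⟩

lemma mem_span_image_of_isSMulRegular {I : Ideal (MvPolynomial σ k)}
    {φ : MvPolynomial (α ⊕ β) k ≃ₐ[k] MvPolynomial σ k} {s : Set (α ⊕ β)} {t : α ⊕ β}
    (hreg : IsSMulRegular (MvPolynomial σ k ⧸ I ⊔ Ideal.span ((fun t => φ (X t)) '' s)) (φ (X t)))
    (hinsert : ∀ w ∈ boundedPart φ r, w ∈ I ⊔ Ideal.span ((fun t => φ (X t)) '' insert t s) →
      w ∈ Ideal.span ((fun t => φ (X t)) '' insert t s)) {w : MvPolynomial σ k}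
    (hw : w ∈ boundedPart φ r) (hwI : w ∈ I ⊔ Ideal.span ((fun t => φ (X t)) '' s)) :
    w ∈ Ideal.span ((fun t => φ (X t)) '' s) := by
  obtain ⟨b, hb⟩ : ∃ b, ∀ m ∈ (φ.symm w).support, m t < b :=
    ⟨_, fun m hm => Nat.lt_succ_of_le (Finset.le_sup (f := fun m => m t) hm)⟩
  induction b generalizing w with
  | zero =>
    have symm_eq_zero : φ.symm w = 0 :=
      support_eq_empty.1 (Finset.eq_empty_of_forall_notMem fun m hm => Nat.not_lt_zero _ (hb m hm))
    rw [(map_eq_zero_iff _ φ.symm.injective).1 symm_eq_zero]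
    exact zero_mem _
  | succ b ih =>
    have mem_insert := hinsert w hw <|
      sup_le_sup_left (Ideal.span_mono (Set.image_mono (Set.subset_insert t s))) I hwI
    set q := (φ.symm w).divMonomial (Finsupp.single t 1)
    have support_q {m} (hm : m ∈ q.support) : Finsupp.single t 1 + m ∈ (φ.symm w).support := by
      rwa [mem_support_iff, ← coeff_divMonomial, ← mem_support_iff]
    have rest_mem : w - φ (X t) * φ q ∈ Ideal.span ((fun t => φ (X t)) '' s) := by
      rw [mem_span_image_iff, map_sub, map_mul, φ.symm_apply_apply, φ.symm_apply_apply]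
      exact sub_X_mul_divMonomial_mem_span_X_image (mem_span_image_iff.1 mem_insert)
    have q_mem : φ q ∈ Ideal.span ((fun t => φ (X t)) '' s) := by
      refine ih (mem_boundedPart_iff.2 fun m hm => ?_) ?_ fun m hm => ?_
      · rw [φ.symm_apply_apply] at hm
        have single_add_mem := mem_boundedPart_iff.1 hw _ (support_q hm)
        rw [boundedExponents, Set.mem_ofPred, map_add, Prod.snd_add, map_add] at single_add_mem
        exact le_of_add_le_right single_add_mem
      · refine (isSMulRegular_quotient_iff_mem_of_smul_mem _ _).1 hreg _ ?_
        rw [smul_eq_mul, ← sub_sub_cancel w (φ (X t) * φ q)]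
        exact sub_mem hwI (Ideal.mem_sup_right rest_mem)
      · rw [φ.symm_apply_apply] at hm
        simpa [Nat.one_add_le_iff] using hb _ (support_q hm)
    rw [← sub_add_cancel w (φ (X t) * φ q)]
    exact add_mem rest_mem (Ideal.mul_mem_left _ _ q_mem)

lemma mem_span_range_of_forms_eq_zero {I : Ideal (MvPolynomial (Fin N) k)} (hI : IdealHomog k I)
    {φ : MvPolynomial (α ⊕ β) k ≃ₐ[k] MvPolynomial (Fin N) k} (hφ : IsLinearChange φ)
    (hlow : ∀ d ≤ r, ∀ f ∈ I, f.IsHomogeneous d → f = 0) {w : MvPolynomial (Fin N) k}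
    (hw : w ∈ boundedPart φ r)
    (hwI : w ∈ I ⊔ Ideal.span ((fun t => φ (X t)) '' Set.range Sum.inl)) :
    w ∈ Ideal.span ((fun t => φ (X t)) '' Set.range Sum.inl) := by
  rw [← sum_homogeneousComponent w]
  refine sum_mem fun d _ => ?_
  rcases le_or_gt d r with hd | hd
  · obtain ⟨g, hg, q, hq, rfl⟩ := Submodule.mem_sup.1 hwI
    rw [map_add, hlow d hd _ (hI g hg d) (homogeneousComponent_isHomogeneous d g), zero_add]
    refine homogeneousComponent_mem_of_mem (isHomogeneous_span_of_linear ?_) hq d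
    rintro _ ⟨t, -, rfl⟩
    exact hφ t
  · rw [mem_span_image_iff, mem_ideal_span_X_image]
    intro m hm
    have m_bounded := mem_boundedPart_iff.1 (homogeneousComponent_mem_boundedPart hφ hw d) m hm
    have degree_m := (hφ.symm_isHomogeneous
      (homogeneousComponent_isHomogeneous d w)).degree_eq_sum_deg_support hm
    rw [← Finsupp.degree_apply, degree_eq_degree_inl_add_degree_inr] at degree_m
    have inl_ne_zero : (Finsupp.sumFinsuppAddEquivProdFinsupp m).1 ≠ 0 := fun h => by
      rw [h, map_zero, zero_add] at degree_m
      exact (degree_m.trans_le m_bounded).not_gt hd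
    obtain ⟨i, hi⟩ := Finsupp.ne_iff.1 inl_ne_zero
    exact ⟨Sum.inl i, ⟨i, rfl⟩, hi⟩

lemma disjoint_boundedPart {a : ℕ} {I : Ideal (MvPolynomial (Fin N) k)} (hI : IdealHomog k I)
    {φ : MvPolynomial (Fin a ⊕ β) k ≃ₐ[k] MvPolynomial (Fin N) k} (hφ : IsLinearChange φ)
    (hlow : ∀ d ≤ r, ∀ f ∈ I, f.IsHomogeneous d → f = 0)
    (hreg : IsRegularFamily I fun i => φ (X (Sum.inl i))) :
    Disjoint (I.restrictScalars k) (boundedPart φ r) := by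
  have mem_span {j : ℕ} (hj : j ≤ a) : ∀ w ∈ boundedPart φ r,
      w ∈ I ⊔ Ideal.span ((fun t => φ (X t)) '' (Sum.inl '' {i | i.val < j})) →
        w ∈ Ideal.span ((fun t => φ (X t)) '' (Sum.inl '' {i | i.val < j})) := by
    induction hj using Nat.decreasingInduction with
    | self =>
      simp only [Fin.is_lt, Set.ofPred_true, Set.image_univ]
      exact fun w hw hwI => mem_span_range_of_forms_eq_zero hI hφ hlow hw hwI
    | of_succ j hj ih =>
      have insert_eq : insert (Sum.inl (β := β) (⟨j, hj⟩ : Fin a)) (Sum.inl '' {i | i.val < j}) =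
          Sum.inl '' {i | i.val < j + 1} := by
        rw [← Set.image_insert_eq]
        congr 1
        ext i
        simp [Fin.ext_iff, le_iff_eq_or_lt]
      refine fun w hw hwI => mem_span_image_of_isSMulRegular ?_ (insert_eq ▸ ih) hw hwI
      rw [Set.image_image]
      exact hreg ⟨j, hj⟩
  refine Submodule.disjoint_def.2 fun w hwI hw => ?_
  simpa using mem_span a.zero_le w hw (Ideal.mem_sup_left hwI)

end Disjoint

/-! ### Hilbert functions -/

section Count

variable {k : Type} [Field k] {α β σ : Type*} {r d N : ℕ}

lemma homogeneousSubmodule_eq_restrictSupport (d : ℕ) :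
    homogeneousSubmodule σ k d = restrictSupport k {m : σ →₀ ℕ | m.degree = d} :=
  homogeneousSubmodule_eq_finsupp_supported σ k d

lemma finrank_restrictSupport (S : Set (σ →₀ ℕ)) :
    Module.finrank k (restrictSupport k S) = S.ncard :=
  Module.finrank_eq_nat_card_basis (basisRestrictSupport k S)

lemma degree_eq_coe_finsuppAntidiag [Fintype σ] [DecidableEq σ] (d : ℕ) :
    {m : σ →₀ ℕ | m.degree = d} = (Finset.univ.finsuppAntidiag d : Finset (σ →₀ ℕ)) := by
  ext m
  simp [Finsupp.degree_eq_sum]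

lemma finrank_homogeneousSubmodule [Fintype σ] (d : ℕ) :
    Module.finrank k (homogeneousSubmodule σ k d) = (Fintype.card σ).multichoose d := by
  classical
  rw [homogeneousSubmodule_eq_restrictSupport, finrank_restrictSupport,
    degree_eq_coe_finsuppAntidiag, Set.ncard_coe_finset,
    Finset.card_finsuppAntidiag_nat_eq_multichoose, Finset.card_univ]

instance finite_homogeneousSubmodule [Finite σ] (d : ℕ) :
    Module.Finite k (homogeneousSubmodule σ k d) := by
  classical
  have := Fintype.ofFinite σ
  rw [homogeneousSubmodule_eq_restrictSupport, degree_eq_coe_finsuppAntidiag]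
  exact Module.Finite.of_basis (basisRestrictSupport k _)

lemma ncard_boundedExponents_inter [Fintype α] [Fintype β] (hd : r ≤ d) :
    ({m | m.degree = d} ∩ boundedExponents α β r).ncard = ∑ i ∈ Finset.range (r + 1),
      (Fintype.card β).multichoose i * (Fintype.card α).multichoose (d - i) := by
  classical
  let split : (α ⊕ β →₀ ℕ) ≃+ (α →₀ ℕ) × (β →₀ ℕ) := Finsupp.sumFinsuppAddEquivProdFinsupp
  let T : Finset ((α →₀ ℕ) × (β →₀ ℕ)) := (Finset.range (r + 1)).biUnion fun i =>
    (Finset.univ.finsuppAntidiag (d - i)) ×ˢ (Finset.univ.finsuppAntidiag i)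
  have image_eq : split '' ({m | m.degree = d} ∩ boundedExponents α β r) = T := by
    rw [← split.coe_toEquiv, Equiv.image_eq_preimage_symm]
    ext ⟨a, b⟩
    have mem_T : (a, b) ∈ T ↔ b.degree ≤ r ∧ a.degree = d - b.degree := by
      simp [T, Finsupp.degree_eq_sum]
    have mem_iff : split.symm (a, b) ∈ {m | m.degree = d} ∩ boundedExponents α β r ↔
        a.degree + b.degree = d ∧ b.degree ≤ r := by
      rw [Set.mem_inter_iff, Set.mem_ofPred, degree_eq_degree_inl_add_degree_inr,
        boundedExponents, Set.mem_ofPred]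
      simp only [split, AddEquiv.apply_symm_apply]
    rw [Finset.mem_coe, mem_T]
    exact mem_iff.trans (by omega)
  rw [← Set.ncard_image_of_injective _ split.injective, image_eq, Set.ncard_coe_finset,
    Finset.card_biUnion]
  · refine Finset.sum_congr rfl fun i _ => ?_
    simp only [Finset.card_product, Finset.card_finsuppAntidiag_nat_eq_multichoose,
      Finset.card_univ, mul_comm]
  · intro i _ j _ hij
    refine Finset.disjoint_left.2 ?_
    rintro ⟨a, b⟩ hi hj
    rw [Finset.mem_product, Finset.mem_finsuppAntidiag, Finset.mem_finsuppAntidiag] at hi hj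
    exact hij (hi.2.1.symm.trans hj.2.1)

variable {φ : MvPolynomial (α ⊕ β) k ≃ₐ[k] MvPolynomial σ k}

lemma finrank_homogeneousSubmodule_inf_boundedPart [Fintype α] [Fintype β]
    (hφ : IsLinearChange φ) (hd : r ≤ d) :
    Module.finrank k ↥(homogeneousSubmodule σ k d ⊓ boundedPart φ r) =
      ∑ i ∈ Finset.range (r + 1),
        (Fintype.card β).multichoose i * (Fintype.card α).multichoose (d - i) := by
  have map_eq : (restrictSupport k ({m | m.degree = d} ∩ boundedExponents α β r)).map
      (φ.toLinearEquiv : MvPolynomial (α ⊕ β) k →ₗ[k] MvPolynomial σ k) =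
      homogeneousSubmodule σ k d ⊓ boundedPart φ r := by
    rw [Submodule.map_equiv_eq_comap_symm]
    ext p
    have hom_iff : p.IsHomogeneous d ↔ (φ.symm p).IsHomogeneous d :=
      ⟨hφ.symm_isHomogeneous, fun h => φ.apply_symm_apply p ▸ hφ.map_isHomogeneous h⟩
    rw [Submodule.mem_inf, mem_homogeneousSubmodule, hom_iff, ← mem_homogeneousSubmodule,
      homogeneousSubmodule_eq_restrictSupport]
    exact Set.subset_inter_iff
  rw [← map_eq, LinearEquiv.finrank_map_eq, finrank_restrictSupport,
    ncard_boundedExponents_inter hd]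

lemma ker_mkₐ_toLinearMap (I : Ideal (MvPolynomial σ k)) :
    LinearMap.ker (Ideal.Quotient.mkₐ k I).toLinearMap = I.restrictScalars k := by
  ext p
  exact Ideal.Quotient.eq_zero_iff_mem

lemma quotComponent_eq_map {I : Ideal (MvPolynomial (Fin N) k)}
    {φ : MvPolynomial (α ⊕ β) k ≃ₐ[k] MvPolynomial (Fin N) k} (hφ : IsLinearChange φ)
    (hI : IdealHomog k I) (hIr : Codisjoint (I.restrictScalars k) (boundedPart φ r)) (d : ℕ) :
    quotComponent k I d = (homogeneousSubmodule (Fin N) k d ⊓ boundedPart φ r).map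
      (Ideal.Quotient.mkₐ k I).toLinearMap := by
  refine le_antisymm ?_ (Submodule.map_mono inf_le_left)
  rintro _ ⟨p, hp, rfl⟩
  obtain ⟨g, hg, w, hw, rfl⟩ := Submodule.mem_sup.1 (hIr.eq_top ▸ Submodule.mem_top : p ∈ _)
  refine ⟨homogeneousComponent d w, ⟨homogeneousComponent_isHomogeneous d w,
    homogeneousComponent_mem_boundedPart hφ hw d⟩, ?_⟩
  rw [← (homogeneousComponent_of_mem hp).trans (if_pos rfl), map_add, map_add, right_eq_add]
  exact Ideal.Quotient.eq_zero_iff_mem.2 (hI g hg d)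

lemma hilbFn_add_finrank [Fintype α] [Fintype β] {I : Ideal (MvPolynomial (Fin N) k)}
    {φ : MvPolynomial (α ⊕ β) k ≃ₐ[k] MvPolynomial (Fin N) k} (hφ : IsLinearChange φ)
    (hI : IdealHomog k I) (hIr : Codisjoint (I.restrictScalars k) (boundedPart φ r))
    (hd : r ≤ d) :
    hilbFn k I d + Module.finrank k
        ↥(homogeneousSubmodule (Fin N) k d ⊓ boundedPart φ r ⊓ I.restrictScalars k) =
      ∑ i ∈ Finset.range (r + 1),
        (Fintype.card β).multichoose i * (Fintype.card α).multichoose (d - i) := by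
  let mkBdd := (Ideal.Quotient.mkₐ k I).toLinearMap.domRestrict
    (homogeneousSubmodule (Fin N) k d ⊓ boundedPart φ r)
  have finrank_range : Module.finrank k (LinearMap.range mkBdd) = hilbFn k I d := by
    rw [hilbFn, quotComponent_eq_map hφ hI hIr, LinearMap.range_domRestrict]
  have finrank_ker : Module.finrank k (LinearMap.ker mkBdd) = Module.finrank k
      ↥(homogeneousSubmodule (Fin N) k d ⊓ boundedPart φ r ⊓ I.restrictScalars k) := by
    rw [LinearMap.ker_domRestrict, ker_mkₐ_toLinearMap, ← Submodule.map_comap_subtype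
      (homogeneousSubmodule (Fin N) k d ⊓ boundedPart φ r), Submodule.finrank_map_subtype_eq]
  have : Module.Finite k ↥(homogeneousSubmodule (Fin N) k d ⊓ boundedPart φ r) :=
    Submodule.finiteDimensional_of_le inf_le_left
  rw [← finrank_range, ← finrank_ker, LinearMap.finrank_range_add_finrank_ker,
    finrank_homogeneousSubmodule_inf_boundedPart hφ hd]

lemma le_hilbFn_of_disjoint [Fintype α] [Fintype β] {I : Ideal (MvPolynomial (Fin N) k)}
    {φ : MvPolynomial (α ⊕ β) k ≃ₐ[k] MvPolynomial (Fin N) k} (hφ : IsLinearChange φ)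
    (hIr : Disjoint (I.restrictScalars k) (boundedPart φ r)) (hd : r ≤ d) :
    ∑ i ∈ Finset.range (r + 1),
      (Fintype.card β).multichoose i * (Fintype.card α).multichoose (d - i) ≤ hilbFn k I d := by
  let mkBdd := (Ideal.Quotient.mkₐ k I).toLinearMap.domRestrict
    (homogeneousSubmodule (Fin N) k d ⊓ boundedPart φ r)
  have mkBdd_injective : Function.Injective mkBdd := by
    rw [← LinearMap.ker_eq_bot, LinearMap.ker_domRestrict, ker_mkₐ_toLinearMap,
      ← Submodule.disjoint_iff_comap_eq_bot]
    exact hIr.symm.mono_left inf_le_right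
  have : Module.Finite k (quotComponent k I d) := Module.Finite.map _ _
  rw [← finrank_homogeneousSubmodule_inf_boundedPart hφ hd,
    ← LinearMap.finrank_range_of_inj mkBdd_injective, LinearMap.range_domRestrict]
  exact Submodule.finrank_mono (Submodule.map_mono inf_le_left)

lemma multichoose_le_finrank [Fintype α] [Finite σ] {I : Ideal (MvPolynomial σ k)}
    (hφ : IsLinearChange φ) {d₀ : ℕ} {w : MvPolynomial σ k} (w_ne : w ≠ 0)
    (w_hom : w.IsHomogeneous d₀) (w_bdd : w ∈ boundedPart φ r) (w_mem : w ∈ I) (hd : d₀ ≤ d) :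
    (Fintype.card α).multichoose (d - d₀) ≤ Module.finrank k
      ↥(homogeneousSubmodule σ k d ⊓ boundedPart φ r ⊓ I.restrictScalars k) := by
  let mulW : MvPolynomial α k →ₗ[k] MvPolynomial σ k :=
    LinearMap.mulRight k w ∘ₗ φ.toLinearMap ∘ₗ (rename Sum.inl).toLinearMap
  have mulW_injective : Function.Injective mulW :=
    (mul_left_injective₀ w_ne).comp (φ.injective.comp (rename_injective _ Sum.inl_injective))
  have : Module.Finite k ↥(homogeneousSubmodule σ k d ⊓ boundedPart φ r ⊓ I.restrictScalars k) :=
    Submodule.finiteDimensional_of_le (inf_le_left.trans inf_le_left)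
  rw [← finrank_homogeneousSubmodule (k := k),
    (Submodule.equivMapOfInjective mulW mulW_injective _).finrank_eq]
  refine Submodule.finrank_mono ?_
  rintro _ ⟨u, hu, rfl⟩
  refine ⟨⟨?_, rename_inl_mul_mem_boundedPart u w_bdd⟩, I.mul_mem_left _ w_mem⟩
  exact Nat.sub_add_cancel hd ▸ (hφ.map_isHomogeneous hu.rename_isHomogeneous).mul w_hom

end Count

section Degree

variable {k : Type} [Field k]

lemma coeff_nonneg_of_eventually_eval_nonneg {n : ℕ} {Q : Polynomial ℚ} (hQ : Q.natDegree ≤ n)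
    (hnonneg : ∀ᶠ d : ℕ in Filter.atTop, 0 ≤ Q.eval (d : ℚ)) : 0 ≤ Q.coeff n := by
  by_contra! coeff_neg
  have natDegree_eq : Q.natDegree = n := Q.natDegree_eq_of_le_of_coeff_ne_zero hQ coeff_neg.ne
  have Q_ne : Q ≠ 0 := by rintro rfl; simp at coeff_neg
  -- The factor `X` makes the degree positive also when `Q` is constant.
  have tendsto_atBot : Filter.Tendsto (fun x : ℚ => (Q * Polynomial.X).eval x) .atTop .atBot := by
    refine Polynomial.tendsto_atBot_of_leadingCoeff_nonpos _ ?_ ?_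
    · rw [Polynomial.degree_mul, Polynomial.degree_X, Polynomial.degree_eq_natDegree Q_ne]
      exact_mod_cast Nat.succ_pos _
    · rw [Polynomial.leadingCoeff_mul, Polynomial.leadingCoeff_X, mul_one,
        Polynomial.leadingCoeff, natDegree_eq]
      exact coeff_neg.le
  obtain ⟨d, eval_nonneg, eval_neg⟩ := (hnonneg.and ((tendsto_atBot.comp
    tendsto_natCast_atTop_atTop).eventually (Filter.eventually_lt_atBot 0))).exists
  rw [Function.comp_apply, Polynomial.eval_mul, Polynomial.eval_X] at eval_neg
  exact eval_neg.not_ge (mul_nonneg eval_nonneg d.cast_nonneg)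

/-- The Hilbert polynomial of the free module over the polynomial ring in `n + 1` variables on the
monomials of degree at most `r` in `e` further variables. -/
def boundedHilbertPoly (n e r : ℕ) : Polynomial ℚ :=
  ∑ i ∈ Finset.range (r + 1), (e.multichoose i : ℚ) • Polynomial.preHilbertPoly ℚ n i

lemma eval_preHilbertPoly {n i d : ℕ} (hi : i ≤ d) :
    (Polynomial.preHilbertPoly ℚ n i).eval (d : ℚ) = (n + 1).multichoose (d - i) := by
  rw [Polynomial.preHilbertPoly_eq_choose_sub_add ℚ n hi, Nat.multichoose_eq,
    show n + 1 + (d - i) - 1 = d - i + n by omega, Nat.choose_symm_add]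

lemma eval_boundedHilbertPoly {n e r d : ℕ} (hd : r ≤ d) :
    (boundedHilbertPoly n e r).eval (d : ℚ) = ↑(∑ i ∈ Finset.range (r + 1),
      e.multichoose i * (n + 1).multichoose (d - i)) := by
  rw [boundedHilbertPoly, Polynomial.eval_finsetSum, Nat.cast_sum]
  refine Finset.sum_congr rfl fun i hi => ?_
  rw [Polynomial.eval_smul, eval_preHilbertPoly ((Finset.mem_range_succ_iff.1 hi).trans hd),
    smul_eq_mul, Nat.cast_mul]

lemma natDegree_boundedHilbertPoly_le (n e r : ℕ) : (boundedHilbertPoly n e r).natDegree ≤ n :=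
  Polynomial.natDegree_sum_le_of_forall_le _ _ fun i _ =>
    (Polynomial.natDegree_smul_le _ _).trans (Polynomial.natDegree_preHilbertPoly ℚ n i).le

lemma coeff_boundedHilbertPoly (n e r : ℕ) :
    (boundedHilbertPoly n e r).coeff n = (e + r).choose r * (n.factorial : ℚ)⁻¹ := by
  simp only [boundedHilbertPoly, Polynomial.finsetSum_coeff, Polynomial.coeff_smul,
    Polynomial.coeff_preHilbertPoly_self, smul_eq_mul, ← Finset.sum_mul, ← Nat.cast_sum,
    Nat.sum_range_multichoose, add_comm r e]
  rw [Nat.choose_symm_add]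

lemma natDegree_boundedHilbertPoly (n e r : ℕ) : (boundedHilbertPoly n e r).natDegree = n := by
  refine (boundedHilbertPoly n e r).natDegree_eq_of_le_of_coeff_ne_zero
    (natDegree_boundedHilbertPoly_le n e r) ?_
  rw [coeff_boundedHilbertPoly]
  exact mul_ne_zero (Nat.cast_ne_zero.2 (Nat.choose_pos (Nat.le_add_left r e)).ne')
    (inv_ne_zero (Nat.cast_ne_zero.2 n.factorial_ne_zero))

variable {n e r N : ℕ} {I : Ideal (MvPolynomial (Fin N) k)}
  {φ : MvPolynomial (Fin (n + 1) ⊕ Fin e) k ≃ₐ[k] MvPolynomial (Fin N) k}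

-- A nonzero form `w` of degree `d₀` in the intersection would lower the Hilbert function by at
-- least that of `k[x₀, …, xₙ] w`, hence the leading coefficient of the Hilbert polynomial.
lemma disjoint_boundedPart_of_hasDeg (hφ : IsLinearChange φ) (hI : IdealHomog k I)
    (hIr : Codisjoint (I.restrictScalars k) (boundedPart φ r))
    (hdeg : HasDeg k I n ((e + r).choose r)) :
    Disjoint (I.restrictScalars k) (boundedPart φ r) := by
  obtain ⟨P, natDegree_P, choose_eq, hilbFn_eq⟩ := hdeg
  rw [Submodule.disjoint_def]
  by_contra! ⟨w, w_mem, w_bdd, w_ne⟩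
  obtain ⟨d₀, component_ne⟩ : ∃ d, homogeneousComponent d w ≠ 0 := by
    by_contra! h
    exact w_ne (by rw [← sum_homogeneousComponent w]; exact Finset.sum_eq_zero fun d _ => h d)
  have natDegree_le : (boundedHilbertPoly n e r - P -
      Polynomial.preHilbertPoly ℚ n d₀).natDegree ≤ n :=
    (Polynomial.natDegree_sub_le_iff_left (Polynomial.natDegree_preHilbertPoly ℚ n d₀).le).2 <|
      (Polynomial.natDegree_sub_le_iff_left natDegree_P.le).2
        (natDegree_boundedHilbertPoly_le n e r)
  have coeff_nonneg := coeff_nonneg_of_eventually_eval_nonneg natDegree_le <| by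
    filter_upwards [hilbFn_eq, Filter.eventually_ge_atTop r,
      Filter.eventually_ge_atTop d₀] with d hilb_eq hr hd₀
    have count := hilbFn_add_finrank hφ hI hIr hr
    have le_finrank := multichoose_le_finrank hφ component_ne
      (homogeneousComponent_isHomogeneous d₀ w) (homogeneousComponent_mem_boundedPart hφ w_bdd d₀)
      (hI w w_mem d₀) hd₀
    rw [Fintype.card_fin] at le_finrank
    simp only [Fintype.card_fin] at count
    rwa [Polynomial.eval_sub, Polynomial.eval_sub, eval_boundedHilbertPoly hr, ← hilb_eq,
      eval_preHilbertPoly hd₀, ← count, Nat.cast_add, add_sub_cancel_left, sub_nonneg,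
      Nat.cast_le]
  have coeff_P : P.coeff n = (e + r).choose r * (n.factorial : ℚ)⁻¹ := by
    rw [choose_eq, mul_inv_cancel_right₀ (Nat.cast_ne_zero.2 n.factorial_ne_zero), ← natDegree_P,
      Polynomial.leadingCoeff]
  rw [Polynomial.coeff_sub, Polynomial.coeff_sub, coeff_boundedHilbertPoly, coeff_P, sub_self,
    zero_sub, Polynomial.coeff_preHilbertPoly_self, neg_nonneg] at coeff_nonneg
  exact coeff_nonneg.not_gt (inv_pos.2 (Nat.cast_pos.2 n.factorial_pos))

lemma hasDeg_of_hilbFn_eq (h : ∀ d, r ≤ d → hilbFn k I d = ∑ i ∈ Finset.range (r + 1),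
    e.multichoose i * (n + 1).multichoose (d - i)) : HasDeg k I n ((e + r).choose r) := by
  refine ⟨boundedHilbertPoly n e r, natDegree_boundedHilbertPoly n e r, ?_, ?_⟩
  · rw [Polynomial.leadingCoeff, natDegree_boundedHilbertPoly, coeff_boundedHilbertPoly,
      inv_mul_cancel_right₀ (Nat.cast_ne_zero.2 n.factorial_ne_zero)]
  filter_upwards [Filter.eventually_ge_atTop r] with d hd
  rw [eval_boundedHilbertPoly hd, h d hd]

lemma hasDeg_of_codisjoint_of_disjoint (hφ : IsLinearChange φ) (hI : IdealHomog k I)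
    (hIφ : Codisjoint (I.restrictScalars k) (boundedPart φ r))
    {ψ : MvPolynomial (Fin (n + 1) ⊕ Fin e) k ≃ₐ[k] MvPolynomial (Fin N) k}
    (hψ : IsLinearChange ψ) (hIψ : Disjoint (I.restrictScalars k) (boundedPart ψ r)) :
    HasDeg k I n ((e + r).choose r) :=
  hasDeg_of_hilbFn_eq fun d hd => by
    have upper := (Nat.le_add_right _ _).trans_eq (hilbFn_add_finrank hφ hI hIφ hd)
    have lower := le_hilbFn_of_disjoint hψ hIψ hd
    simp only [Fintype.card_fin] at upper lower
    exact upper.antisymm lower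

end Degree

/-! ### Linear forms in general position -/

section GeneralLinearForms

variable {k : Type*} [Field k] {σ : Type*}

lemma exists_isHomogeneous_one_notMem [Infinite k] {P : Set (Ideal (MvPolynomial σ k))}
    (hP : P.Finite) (hvars : ∀ p ∈ P, ¬ idealOfVars σ k ≤ p) :
    ∃ l : MvPolynomial σ k, l.IsHomogeneous 1 ∧ ∀ p ∈ P, l ∉ p := by
  classical
  let linearPart (p : Ideal (MvPolynomial σ k)) : Subspace k (homogeneousSubmodule σ k 1) :=
    (p.restrictScalars k).comap (Submodule.subtype _)
  have top_notMem : ⊤ ∉ hP.toFinset.image linearPart := by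
    intro mem_image
    obtain ⟨p, hp, p_top⟩ := Finset.mem_image.1 mem_image
    refine hvars p (hP.mem_toFinset.1 hp) (Ideal.span_le.2 ?_)
    rintro _ ⟨i, rfl⟩
    exact (SetLike.ext_iff.1 p_top ⟨X i, isHomogeneous_X k i⟩).2 Submodule.mem_top
  obtain ⟨l, hl⟩ :=
    (Set.ne_univ_iff_exists_notMem _).1 (Subspace.biUnion_ne_univ_of_top_notMem top_notMem)
  refine ⟨l.1, l.2, fun p hp l_mem => hl (Set.mem_biUnion (x := linearPart p) ?_ l_mem)⟩
  exact Finset.mem_image_of_mem linearPart (hP.mem_toFinset.2 hp)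

lemma exists_isHomogeneous_one_isSMulRegular [Infinite k] [Finite σ] {ι : Type*} [Finite ι]
    {J : ι → Ideal (MvPolynomial σ k)}
    (hJ : ∀ i, ∃ x ∈ idealOfVars σ k, IsSMulRegular (MvPolynomial σ k ⧸ J i) x) :
    ∃ l : MvPolynomial σ k, l.IsHomogeneous 1 ∧
      ∀ i, IsSMulRegular (MvPolynomial σ k ⧸ J i) l := by
  obtain ⟨l, hl, notMem⟩ := exists_isHomogeneous_one_notMem
    (P := ⋃ i, associatedPrimes (MvPolynomial σ k) (MvPolynomial σ k ⧸ J i))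
    (Set.finite_iUnion fun i => associatedPrimes.finite _ _) (by
      simp only [Set.mem_iUnion]
      rintro p ⟨i, hp⟩ le_p
      obtain ⟨x, hx, regular⟩ := hJ i
      have := (biUnion_associatedPrimes_eq_compl_regular (MvPolynomial σ k)
        (MvPolynomial σ k ⧸ J i)).subset (Set.mem_biUnion hp (le_p hx))
      exact this regular)
  refine ⟨l, hl, fun i => ?_⟩
  by_contra not_regular
  obtain ⟨p, hp, l_mem⟩ := Set.mem_iUnion₂.1 <|
    (biUnion_associatedPrimes_eq_compl_regular (MvPolynomial σ k)
      (MvPolynomial σ k ⧸ J i)).superset not_regular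
  exact notMem p (Set.mem_iUnion.2 ⟨i, hp⟩) l_mem

end GeneralLinearForms

section RegularLinearForms

variable {c : ℕ}

lemma image_castSucc_Iio {A : Type*} (x : Fin (c + 1) → A) (i : Fin c) :
    (fun j : Fin c => x j.castSucc) '' Set.Iio i = x '' Set.Iio i.castSucc := by
  rw [← Fin.image_castSucc_Iio, Set.image_image]

variable {A : Type*} [CommRing A] {I : Ideal A}

lemma sup_span_image_Iio_zero (x : Fin (c + 1) → A) : I ⊔ Ideal.span (x '' Set.Iio 0) = I := by
  rw [show Set.Iio (0 : Fin (c + 1)) = ∅ from isMin_bot.Iio_eq, Set.image_empty, Ideal.span_empty,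
    sup_bot_eq]

lemma isSMulRegular_quotient_sup_swap {J : Ideal A} {x y : A} (hx : IsSMulRegular (A ⧸ J) x)
    (hy : IsSMulRegular (A ⧸ J ⊔ Ideal.span {x}) y) :
    IsSMulRegular (A ⧸ J ⊔ Ideal.span {y}) x := by
  rw [isSMulRegular_quotient_iff_mem_of_smul_mem] at *
  simp only [smul_eq_mul, Ideal.mem_span_singleton_sup, sup_comm J] at *
  rintro m ⟨a, j, hj, eq_xm⟩
  obtain ⟨b, j', hj', rfl⟩ := hy a ⟨m, -j, neg_mem hj, by rw [mul_comm m, ← eq_xm]; ring⟩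
  refine ⟨b, m - b * y, hx _ ?_, add_sub_cancel _ _⟩
  rw [show x * (m - b * y) = j + j' * y by linear_combination -eq_xm]
  exact add_mem hj (J.mul_mem_right _ hj')

lemma IsRegularFamily.castSucc {x : Fin (c + 1) → A} (hx : IsRegularFamily I x) :
    IsRegularFamily I fun i : Fin c => x i.castSucc := fun i => by
  rw [image_castSucc_Iio]
  exact hx i.castSucc

lemma IsRegularFamily.castSucc_sup {x : Fin (c + 1) → A} (hx : IsRegularFamily I x) {y : A}
    (hy : ∀ i, IsSMulRegular (A ⧸ I ⊔ Ideal.span (x '' Set.Iio i)) y) :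
    IsRegularFamily (I ⊔ Ideal.span {y}) fun i : Fin c => x i.castSucc := fun i => by
  rw [image_castSucc_Iio, sup_right_comm]
  refine isSMulRegular_quotient_sup_swap (hx i.castSucc) ?_
  have image_Iio_succ : x '' Set.Iio i.succ = x '' Set.Iio i.castSucc ∪ {x i.castSucc} := by
    rw [← Set.image_singleton, ← Set.image_union]
    congr 1
    ext j
    simp [← Fin.le_castSucc_iff, le_iff_lt_or_eq]
  rw [sup_assoc, ← Ideal.span_union, ← image_Iio_succ]
  exact hy i.succ

lemma IsRegularFamily.cons {y : A} {x : Fin c → A} (hy : IsSMulRegular (A ⧸ I) y)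
    (hx : IsRegularFamily (I ⊔ Ideal.span {y}) x) :
    IsRegularFamily I (Fin.cons y x : Fin (c + 1) → A) := by
  refine Fin.cases ?_ fun i => ?_
  · rwa [sup_span_image_Iio_zero]
  · have image_cons : (Fin.cons y x : Fin (c + 1) → A) '' Set.Iio i.succ =
        {y} ∪ x '' Set.Iio i := by
      ext a
      simp [Fin.exists_fin_succ, eq_comm]
    rw [image_cons, Ideal.span_union, ← sup_assoc, Fin.cons_succ]
    exact hx i

variable {k : Type*} [Field k] {σ : Type*} {I : Ideal (MvPolynomial σ k)}

lemma IsRegularFamily.exists_isHomogeneous_one [Infinite k] [Finite σ]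
    {x : Fin c → MvPolynomial σ k} (hx : IsRegularFamily I x)
    (hvars : ∀ i, x i ∈ idealOfVars σ k) :
    ∃ l : Fin c → MvPolynomial σ k, (∀ i, (l i).IsHomogeneous 1) ∧ IsRegularFamily I l := by
  induction c generalizing I with
  | zero => exact ⟨Fin.elim0, fun i => i.elim0, fun i => i.elim0⟩
  | succ c ih =>
    obtain ⟨l, hl, regular⟩ :=
      exists_isHomogeneous_one_isSMulRegular fun i => ⟨x i, hvars i, hx i⟩
    obtain ⟨l', hl', hl'_regular⟩ := ih (hx.castSucc_sup regular) fun i => hvars i.castSucc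
    refine ⟨Fin.cons l l', Fin.cases hl hl', .cons ?_ hl'_regular⟩
    rw [← sup_span_image_Iio_zero (I := I) x]
    exact regular 0

lemma IsRegularFamily.linearIndependent (hI : I ≤ idealOfVars σ k)
    {x : Fin c → MvPolynomial σ k} (hx : IsRegularFamily I x)
    (hvars : ∀ i, x i ∈ idealOfVars σ k) : LinearIndependent k x := by
  induction c with
  | zero => exact linearIndependent_empty_type
  | succ c ih =>
    refine linearIndependent_finSucc'.2 ⟨ih hx.castSucc fun i => hvars i.castSucc, fun hmem => ?_⟩
    have last_mem : x (Fin.last c) ∈ I ⊔ Ideal.span (x '' Set.Iio (Fin.last c)) := by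
      refine Ideal.mem_sup_right
        (Submodule.span_le_restrictScalars k _ _ (Submodule.span_mono ?_ hmem))
      rintro _ ⟨i, rfl⟩
      exact ⟨_, i.castSucc_lt_last, rfl⟩
    have one_mem := (isSMulRegular_quotient_iff_mem_of_smul_mem _ _).1 (hx (Fin.last c)) 1
      (by rwa [smul_eq_mul, mul_one])
    have sup_le_vars : I ⊔ Ideal.span (x '' Set.Iio (Fin.last c)) ≤ idealOfVars σ k :=
      sup_le hI (Ideal.span_le.2 (Set.image_subset_iff.2 fun i _ => hvars i))
    have := mem_idealOfVars_iff.1 (sup_le_vars one_mem)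
    rw [map_one] at this
    exact one_ne_zero this

end RegularLinearForms

/-! ### Linear parameters -/

section LinearParameters

variable {k : Type*} [Field k] {σ : Type*} {J : Ideal (MvPolynomial σ k)}

lemma le_idealOfVars_of_mem_minimalPrimes (hJ : J.IsHomogeneous (homogeneousSubmodule σ k))
    {p : Ideal (MvPolynomial σ k)} (hp : p ∈ J.minimalPrimes) : p ≤ idealOfVars σ k := by
  let core := p.homogeneousCore (homogeneousSubmodule σ k)
  have core_le : core.toIdeal ≤ p := Ideal.toIdeal_homogeneousCore_le _ _
  have le_core : J ≤ core.toIdeal := by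
    rw [← hJ.toIdeal_homogeneousCore_eq_self]
    exact Ideal.homogeneousCore_mono _ hp.1.2
  have core_prime : core.toIdeal.IsPrime := hp.1.1.homogeneousCore
  exact (hp.2 ⟨core_prime, le_core⟩ core_le).trans
    (le_idealOfVars (fun _ hf => homogeneousComponent_mem_of_mem core.isHomogeneous hf 0)
      core_prime.ne_top)

lemma isMaximal_idealOfVars : (idealOfVars σ k).IsMaximal := by
  have : idealOfVars σ k = RingHom.ker (constantCoeff (R := k) (σ := σ)) :=
    Ideal.ext fun p => mem_idealOfVars_iff
  rw [this]
  exact RingHom.ker_isMaximal_of_surjective _ fun c => ⟨C c, constantCoeff_C σ c⟩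

lemma idealOfVars_le_radical_of_ringKrullDim_le_zero
    (hJ : J.IsHomogeneous (homogeneousSubmodule σ k))
    (hdim : ringKrullDim (MvPolynomial σ k ⧸ J) ≤ 0) : idealOfVars σ k ≤ J.radical := by
  rw [← J.sInf_minimalPrimes]
  refine le_sInf fun p hp => ?_
  have p_maximal := Ideal.krullDimLE_zero_quotient_iff_forall_minimalPrimes_isMaximal.1
    (Ring.krullDimLE_iff.2 (by exact_mod_cast hdim)) p hp
  exact (p_maximal.eq_of_le isMaximal_idealOfVars.ne_top
    (le_idealOfVars_of_mem_minimalPrimes hJ hp)).ge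

lemma idealOfVars_le_radical_of_le_minimalPrime
    (hJ : J.IsHomogeneous (homogeneousSubmodule σ k)) {p : Ideal (MvPolynomial σ k)}
    (hp : p ∈ J.minimalPrimes) (le_p : idealOfVars σ k ≤ p) : idealOfVars σ k ≤ J.radical := by
  rw [← J.sInf_minimalPrimes]
  refine le_sInf fun q hq => le_p.trans (hp.2 hq.1 ?_)
  exact (le_idealOfVars_of_mem_minimalPrimes hJ hq).trans le_p

lemma ringKrullDim_quotient_sup_span_singleton_add_one_le {A : Type*} [CommRing A]
    {J : Ideal A} {l : A} (hl : ∀ p ∈ J.minimalPrimes, l ∉ p) :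
    ringKrullDim (A ⧸ J ⊔ Ideal.span {l}) + 1 ≤ ringKrullDim (A ⧸ J) := by
  have drop := Module.supportDim_quotSMulTop_succ_le_of_notMem_minimalPrimes (M := A ⧸ J)
    (x := l) (by rwa [Ideal.annihilator_quotient])
  rwa [Module.supportDim, Module.support_quotSMulTop, Module.support_eq_zeroLocus,
    Ideal.annihilator_quotient, ← PrimeSpectrum.zeroLocus_span {l},
    ← PrimeSpectrum.zeroLocus_sup, ← ringKrullDim_quotient,
    Module.supportDim_quotient_eq_ringKrullDim] at drop

lemma exists_linearForms_idealOfVars_le_radical [Infinite k] [Finite σ]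
    (hJ : J.IsHomogeneous (homogeneousSubmodule σ k)) {s : ℕ}
    (hdim : ringKrullDim (MvPolynomial σ k ⧸ J) ≤ s) :
    ∃ v : Fin s → MvPolynomial σ k, (∀ i, (v i).IsHomogeneous 1) ∧
      idealOfVars σ k ≤ (J ⊔ Ideal.span (Set.range v)).radical := by
  induction s generalizing J with
  | zero =>
    exact ⟨0, fun i => i.elim0, (idealOfVars_le_radical_of_ringKrullDim_le_zero hJ
      (by exact_mod_cast hdim)).trans (Ideal.radical_mono le_sup_left)⟩
  | succ s ih =>
    by_cases hvars : ∃ p ∈ J.minimalPrimes, idealOfVars σ k ≤ p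
    · obtain ⟨p, hp, le_p⟩ := hvars
      exact ⟨0, fun _ => isHomogeneous_zero _ _ _,
        (idealOfVars_le_radical_of_le_minimalPrime hJ hp le_p).trans
          (Ideal.radical_mono le_sup_left)⟩
    · push Not at hvars
      obtain ⟨l, hl, notMem⟩ := exists_isHomogeneous_one_notMem
        (J.finite_minimalPrimes_of_isNoetherianRing) hvars
      have dim_le : ringKrullDim (MvPolynomial σ k ⧸ J ⊔ Ideal.span {l}) ≤ s := by
        have := (ringKrullDim_quotient_sup_span_singleton_add_one_le notMem).trans hdim
        rw [Nat.cast_add] at this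
        exact ENat.WithBot.add_le_add_natCast_right_iff.1 this
      obtain ⟨v, hv, le_radical⟩ := ih
        (hJ.sup (isHomogeneous_span_of_linear (T := {l}) (by simpa using hl))) dim_le
      refine ⟨Fin.cons l v, Fin.cases hl hv, ?_⟩
      rwa [Fin.range_cons, Ideal.span_insert, ← sup_assoc]

lemma exists_forall_mem_of_idealOfVars_le_radical [Finite σ]
    (hJ : idealOfVars σ k ≤ J.radical) :
    ∃ m, ∀ d, m ≤ d → ∀ p : MvPolynomial σ k, p.IsHomogeneous d → p ∈ J := by
  obtain ⟨m, pow_le⟩ := Ideal.exists_pow_le_of_le_radical_of_fg hJ (idealOfVars_fg σ k)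
  refine ⟨m, fun d hmd p hp => pow_le ?_⟩
  rw [mem_pow_idealOfVars_iff']
  intro x hx
  exact hp.coeff_eq_zero (hx.trans_le hmd).ne

end LinearParameters

/-! ### The reduction number -/

section ReductionNumber

variable {k : Type} [Field k] {N c : ℕ} {I : Ideal (MvPolynomial (Fin N) k)}

lemma infinite_quotComponent_one [Infinite k]
    (hdim : 0 < ringKrullDim (MvPolynomial (Fin N) k ⧸ I)) : Infinite (quotComponent k I 1) := by
  have : Nontrivial (quotComponent k I 1) := by
    rw [Submodule.nontrivial_iff_ne_bot]
    intro eq_bot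
    refine hdim.not_ge ?_
    have vars_le : idealOfVars (Fin N) k ≤ I := by
      refine Ideal.span_le.2 ?_
      rintro _ ⟨i, rfl⟩
      refine Ideal.Quotient.eq_zero_iff_mem.1 ((Submodule.mem_bot k).1 ?_)
      rw [← eq_bot]
      exact ⟨X i, isHomogeneous_X k i, rfl⟩
    have field := (Ideal.Quotient.maximal_ideal_iff_isField_quotient _).1
      (isMaximal_idealOfVars (k := k) (σ := Fin N))
    rw [← ringKrullDim_eq_zero_of_isField field]
    exact ringKrullDim_le_of_surjective (Ideal.Quotient.factor vars_le)
      (Ideal.Quotient.factor_surjective vars_le)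
  exact Module.Free.infinite k _

lemma exists_finset_quotComponent_le_span [Infinite k] (hI : IdealHomog k I) (hc : 0 < c)
    (hdim : ringKrullDim (MvPolynomial (Fin N) k ⧸ I) = c) :
    ∃ t, 0 < t ∧ ∃ L : Finset (MvPolynomial (Fin N) k ⧸ I),
      (L : Set (MvPolynomial (Fin N) k ⧸ I)) ⊆ quotComponent k I 1 ∧ L.card = c ∧
      quotComponent k I (t + 1) ≤
        (Ideal.span (L : Set (MvPolynomial (Fin N) k ⧸ I))).restrictScalars k := by
  classical
  obtain ⟨v, hv, le_radical⟩ := exists_linearForms_idealOfVars_le_radical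
    (isHomogeneous_iff_intComponent_mem.2 fun p hp z => hI.intComponent_mem hp z) hdim.le
  obtain ⟨m, forms_mem⟩ := exists_forall_mem_of_idealOfVars_le_radical le_radical
  have := infinite_quotComponent_one (I := I) (by rw [hdim]; exact_mod_cast hc)
  let w (i : Fin c) : quotComponent k I 1 := ⟨Ideal.Quotient.mk I (v i), v i, hv i, rfl⟩
  obtain ⟨L, w_mem, L_card⟩ := Infinite.exists_superset_card_eq (Finset.univ.image w) c
    (Finset.card_image_le.trans (by simp only [Finset.card_univ, Fintype.card_fin, le_refl]))
  refine ⟨m + 1, m.succ_pos, L.map (Function.Embedding.subtype _), ?_,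
    (Finset.card_map _).trans L_card, ?_⟩
  · intro y hy
    obtain ⟨z, -, rfl⟩ := Finset.mem_map.1 hy
    exact z.2
  · rintro _ ⟨p, hp, rfl⟩
    have mk_mem : Ideal.Quotient.mk I p ∈ (Ideal.span (Set.range v)).map (Ideal.Quotient.mk I) := by
      rw [Ideal.mem_quotient_iff_mem_sup, sup_comm]
      exact forms_mem (m + 1 + 1) (by omega) p hp
    rw [Ideal.map_span] at mk_mem
    refine Ideal.span_mono ?_ mk_mem
    rintro _ ⟨_, ⟨i, rfl⟩, rfl⟩
    exact Finset.mem_map.2 ⟨w i, w_mem (Finset.mem_image_of_mem w (Finset.mem_univ i)), rfl⟩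

lemma mem_of_isHomogeneous_of_le {σ : Type*} {J : Ideal (MvPolynomial σ k)} {m d : ℕ}
    (hJ : ∀ p, p.IsHomogeneous m → p ∈ J) (hmd : m ≤ d) {p : MvPolynomial σ k}
    (hp : p.IsHomogeneous d) : p ∈ J := by
  have : homogeneousSubmodule σ k d ≤ J.restrictScalars k := by
    rw [← homogeneousSubmodule_one_pow, ← Nat.add_sub_cancel' hmd, pow_add,
      homogeneousSubmodule_one_pow, Submodule.mul_le]
    exact fun a ha b _ => J.mul_mem_right b (hJ a ha)
  exact this hp

lemma exists_isHomogeneous_one_forall_mem_sup_span [Infinite k] (hI : IdealHomog k I)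
    (hc : 0 < c) (hdim : ringKrullDim (MvPolynomial (Fin N) k ⧸ I) = c) :
    ∃ v : Fin c → MvPolynomial (Fin N) k, (∀ i, (v i).IsHomogeneous 1) ∧
      ∀ d, redNumAll k I c < d → ∀ p : MvPolynomial (Fin N) k, p.IsHomogeneous d →
        p ∈ I ⊔ Ideal.span (Set.range v) := by
  obtain ⟨-, L, L_linear, L_card, comp_le⟩ :=
    Nat.sInf_mem (exists_finset_quotComponent_le_span hI hc hdim)
  let y (i : Fin c) : L := L.equivFinOfCardEq L_card |>.symm i
  choose v hv mk_v using fun i => L_linear (y i).2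
  have span_L : Ideal.span (L : Set (MvPolynomial (Fin N) k ⧸ I)) =
      (Ideal.span (Set.range v)).map (Ideal.Quotient.mk I) := by
    rw [Ideal.map_span, ← Set.range_comp,
      show Ideal.Quotient.mk I ∘ v = Subtype.val ∘ y from funext mk_v,
      (L.equivFinOfCardEq L_card).symm.surjective.range_comp, Subtype.range_coe]
  refine ⟨v, hv, fun d hd p hp => mem_of_isHomogeneous_of_le (fun q hq => ?_) hd hp⟩
  rw [sup_comm, ← Ideal.mem_quotient_iff_mem_sup, ← span_L]
  exact comp_le ⟨q, hq, rfl⟩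

lemma exists_linearChange_forall_mem_sup_span [Infinite k] {b : ℕ} (hI : IdealHomog k I)
    (hc : 0 < c) (hdim : ringKrullDim (MvPolynomial (Fin N) k ⧸ I) = c) (hN : N = c + b) :
    ∃ φ : MvPolynomial (Fin c ⊕ Fin b) k ≃ₐ[k] MvPolynomial (Fin N) k, IsLinearChange φ ∧
      ∀ d, redNumAll k I c < d → ∀ p : MvPolynomial (Fin N) k, p.IsHomogeneous d →
        p ∈ I ⊔ Ideal.span (Set.range fun i => φ (X (Sum.inl i))) := by
  obtain ⟨v, hv, forms_mem⟩ := exists_isHomogeneous_one_forall_mem_sup_span hI hc hdim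
  obtain ⟨φ, hφ, span_le⟩ := exists_linearChange_span_le ((Fintype.card_fin N).trans hN) hv
  exact ⟨φ, hφ, fun d hd p hp => sup_le_sup_left span_le I (forms_mem d hd p hp)⟩

end ReductionNumber

/-! ### The extremal case -/

section Extremal

variable {k : Type} [Field k] {α β σ : Type*} {N c r : ℕ}

lemma forms_eq_zero_of_disjoint_boundedPart {I : Ideal (MvPolynomial σ k)}
    {φ : MvPolynomial (α ⊕ β) k ≃ₐ[k] MvPolynomial σ k} (hφ : IsLinearChange φ)
    (hI : Disjoint (I.restrictScalars k) (boundedPart φ r)) :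
    ∀ d ≤ r, ∀ f ∈ I, f.IsHomogeneous d → f = 0 :=
  fun _ hd f hf f_hom =>
    Submodule.disjoint_def.1 hI f hf (mem_boundedPart_of_isHomogeneous hφ hd f_hom)

lemma isRegularFamily_of_isCompl_boundedPart {I : Ideal (MvPolynomial σ k)}
    {φ : MvPolynomial (Fin c ⊕ β) k ≃ₐ[k] MvPolynomial σ k}
    (hI : IsCompl (I.restrictScalars k) (boundedPart φ r)) :
    IsRegularFamily I fun i => φ (X (Sum.inl i)) := fun i => by
  rw [← Set.image_image (fun t => φ (X t)) Sum.inl]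
  refine isSMulRegular_of_isCompl_boundedPart hI (Set.image_subset_range _ _) ?_
  rintro ⟨j, hj, eq_inl⟩
  exact (Set.mem_Iio.1 hj).ne (Sum.inl_injective eq_inl)

lemma MinGradedFreeRes.isLinear_of_isCompl_boundedPart [Finite α] [Finite β]
    {I : Ideal (MvPolynomial (Fin N) k)}
    (res : MinGradedFreeRes k (Fin N) (MvPolynomial (Fin N) k ⧸ I) (quotDeg k I))
    {φ : MvPolynomial (α ⊕ β) k ≃ₐ[k] MvPolynomial (Fin N) k} (hφ : IsLinearChange φ)
    (hI : IsCompl (I.restrictScalars k) (boundedPart φ r))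
    (hmem : ∀ d, r < d → ∀ p : MvPolynomial (Fin N) k, p.IsHomogeneous d →
      p ∈ I ⊔ Ideal.span (Set.range fun i => φ (X (Sum.inl i)))) (i : ℕ) (j : ℤ)
    (hβ : res.β i j ≠ 0) : (i = 0 ∧ j = 0) ∨ (1 ≤ i ∧ j = r) := by
  let x : (j : ℤ) × Fin (res.β i j) := ⟨j, 0, Nat.pos_of_ne_zero hβ⟩
  cases i with
  | zero => exact .inl ⟨rfl, eq_zero_of_gen_zero x⟩
  | succ i =>
    refine .inr ⟨i.succ_pos, le_antisymm ?_
      (le_of_forms_eq_zero (forms_eq_zero_of_disjoint_boundedPart hφ hI.disjoint) i x)⟩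
    have := Fintype.ofFinite α
    let s : Finset (α ⊕ β) := Finset.univ.map Function.Embedding.inl
    have coe_s : (s : Set (α ⊕ β)) = Set.range Sum.inl := by
      rw [Finset.coe_map, Finset.coe_univ, Set.image_univ]; rfl
    refine le_of_isSMulRegular hφ s (fun s' hs' t ht ht' => ?_) ?_ hβ
    · obtain ⟨t, -, rfl⟩ := Finset.mem_map.1 ht
      exact isSMulRegular_of_isCompl_boundedPart hI (coe_s ▸ hs') ht'
    · rwa [coe_s, ← Set.range_comp]

lemma MinGradedFreeRes.forms_eq_zero_of_isLinear {I : Ideal (MvPolynomial (Fin N) k)}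
    (hI_top : I ≠ ⊤) (res : MinGradedFreeRes k (Fin N) (MvPolynomial (Fin N) k ⧸ I) (quotDeg k I))
    (hres : ∀ (i : ℕ) (j : ℤ), res.β i j ≠ 0 → (i = 0 ∧ j = 0) ∨ (1 ≤ i ∧ j = r)) :
    ∀ d ≤ r, ∀ f ∈ I, f.IsHomogeneous d → f = 0 :=
  forms_eq_zero_of_le hI_top fun j hj => by
    rcases hres 1 j hj with ⟨h, -⟩ | ⟨-, rfl⟩
    · exact absurd h one_ne_zero
    · exact le_rfl

lemma exists_linearChange_disjoint_boundedPart [Infinite k] {b : ℕ}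
    {I : Ideal (MvPolynomial (Fin N) k)} (hI : IdealHomog k I) (hI_top : I ≠ ⊤) (hN : N = c + b)
    (hCM : IsCMQuot k I c) (hlow : ∀ d ≤ r, ∀ f ∈ I, f.IsHomogeneous d → f = 0) :
    ∃ ψ : MvPolynomial (Fin c ⊕ Fin b) k ≃ₐ[k] MvPolynomial (Fin N) k, IsLinearChange ψ ∧
      Disjoint (I.restrictScalars k) (boundedPart ψ r) := by
  obtain ⟨x, x_mem, x_regular⟩ := (isCMQuot_iff_exists_isRegularFamily hI hI_top).1 hCM
  obtain ⟨l, l_linear, l_regular⟩ := x_regular.exists_isHomogeneous_one x_mem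
  obtain ⟨ψ, hψ, ψ_inl⟩ := exists_linearChange_of_linearIndependent
    ((Fintype.card_fin N).trans hN) l_linear (l_regular.linearIndependent (hI.le_idealOfVars hI_top)
      fun i => mem_idealOfVars_of_isHomogeneous_one (l_linear i))
  exact ⟨ψ, hψ, disjoint_boundedPart hI hψ hlow (by simpa only [ψ_inl] using l_regular)⟩

end Extremal

end Paper

end

open Paper MvPolynomial in
theorem stmt12_general (k : Type) [Field k] [Infinite k] (n e r : ℕ)
    (I : Ideal (MvPolynomial (Fin (n + e + 1)) k)) (hIhom : IdealHomog k I)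
    (hdim : ringKrullDim (MvPolynomial (Fin (n + e + 1)) k ⧸ I) = n + 1)
    (hr : redNumAll k I (n + 1) = r) :
    HasDeg k I n ((e + r).choose r) ↔
      (IsCMQuot k I (n + 1) ∧
        ∀ res : MinGradedFreeRes k (Fin (n + e + 1))
            (MvPolynomial (Fin (n + e + 1)) k ⧸ I) (quotDeg k I),
          ∀ (i : ℕ) (j : ℤ), res.β i j ≠ 0 → (i = 0 ∧ j = 0) ∨ (1 ≤ i ∧ j = (r : ℤ))) := by
  subst hr
  have hI_top : I ≠ ⊤ := by
    rintro rfl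
    rw [ringKrullDim_eq_bot_of_subsingleton] at hdim
    exact WithBot.natCast_ne_bot (n + 1) (by exact_mod_cast hdim.symm)
  have hN : n + e + 1 = n + 1 + e := by ring
  obtain ⟨φ, hφ, forms_mem⟩ :=
    exists_linearChange_forall_mem_sup_span hIhom n.succ_pos (by exact_mod_cast hdim) hN
  have spans := codisjoint_boundedPart hφ hIhom forms_mem
  constructor
  · intro hdeg
    have compl : IsCompl _ _ := ⟨disjoint_boundedPart_of_hasDeg hφ hIhom spans hdeg, spans⟩
    refine ⟨(isCMQuot_iff_exists_isRegularFamily hIhom hI_top).2 ⟨_, fun i => ?_,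
      isRegularFamily_of_isCompl_boundedPart compl⟩,
      fun res => res.isLinear_of_isCompl_boundedPart hφ compl forms_mem⟩
    exact mem_idealOfVars_of_isHomogeneous_one (hφ _)
  · rintro ⟨hCM, linear⟩
    obtain ⟨res⟩ := nonempty_minGradedFreeRes hIhom hI_top
    obtain ⟨ψ, hψ, disjoint⟩ := exists_linearChange_disjoint_boundedPart hIhom hI_top hN hCM
      (res.forms_eq_zero_of_isLinear hI_top (linear res))
    exact hasDeg_of_codisjoint_of_disjoint hφ hIhom spans hψ disjoint

/-- Theorem 1.1 (equality case): `deg(X) = C(e+r, r)` holds iff the homogeneous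
coordinate ring `R = S₀/I_X` is Cohen-Macaulay with an `(r+1)`-linear minimal free
resolution, i.e. `β_{ij}(R) = 0` unless `i = j = 0`, or `i ≥ 1` and `j = r`. -/
theorem stmt12 (k : Type) [Field k] [IsAlgClosed k] (n e r : ℕ) (he : 0 < e)
    (I : Ideal (MvPolynomial (Fin (n + e + 1)) k))
    (hIhom : Paper.IdealHomog k I) (hsat : Paper.IsSaturatedIdeal k I)
    (hnd : Paper.Nondegenerate k I) (hproper : I ≠ ⊤)
    (hdim : ringKrullDim (MvPolynomial (Fin (n + e + 1)) k ⧸ I) = n + 1)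
    (hr : Paper.redNumAll k I (n + 1) = r) :
    Paper.HasDeg k I n ((e + r).choose r) ↔
      (Paper.IsCMQuot k I (n + 1) ∧
        ∀ res : Paper.MinGradedFreeRes k (Fin (n + e + 1))
            (MvPolynomial (Fin (n + e + 1)) k ⧸ I) (Paper.quotDeg k I),
          ∀ (i : ℕ) (j : ℤ), res.β i j ≠ 0 →
            (i = 0 ∧ j = 0) ∨ (1 ≤ i ∧ j = (r : ℤ))) :=
  stmt12_general k n e r I hIhom hdim hr
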